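/- arXiv:2410.23220 — 2 statements merged into one kernel-verified Lean document; each statement's English description precedes it below -/
import Mathlib

section
/- Let ℓ ≥ 1 and let C, Γ : [0,1] → ℝ^d be continuous curves with ∫₀¹ C(t) dt = 0 and ∫₀¹ Γ(t) dt = 0, ‖C(t) − Γ(t)‖ ≤ 1/3 and ‖C(t)‖, ‖Γ(t)‖ < 1 for all t ∈ [0,1]. Suppose that for every 1 ≤ k ≤ ℓ − 1 and all indices j_1, …, j_k ∈ {1, …, d}, ∫₀¹ C(t)_{j_1} ⋯ C(t)_{j_k} dt = ∫₀¹ Γ(t)_{j_1} ⋯ Γ(t)_{j_k} dt. Then for all σ ≥ 1, ∫_{ℝ^d} (p_{C,σ}(x) − p_{Γ,σ}(x))² / p_{C,σ}(x) dx ≤ K_ℓ σ^{−2ℓ} ρ(C, Γ), where K_ℓ = 12 Σ_{k≥ℓ} 2^k / k!. -/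
open MeasureTheory Filter Set
noncomputable section

/-- Density `φ_σ` of the isotropic Gaussian `N(0, σ²I_d)` on `ℝ^d`. -/
def gaussDens (d : ℕ) (σ : ℝ) (x : EuclideanSpace ℝ (Fin d)) : ℝ :=
  (2 * Real.pi * σ ^ 2) ^ (-(d : ℝ) / 2) * Real.exp (-‖x‖ ^ 2 / (2 * σ ^ 2))

/-- Density `p_{C,σ}(x) = ∫₀¹ φ_σ(x − C(t)) dt` of the noisy curve distribution, i.e. the law
of `C(τ) + σξ` with `τ` uniform on `[0,1]` and `ξ ~ N(0, I_d)` independent of `τ`. -/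
def noisyDens {d : ℕ} (C : ℝ → EuclideanSpace ℝ (Fin d)) (σ : ℝ)
    (x : EuclideanSpace ℝ (Fin d)) : ℝ :=
  ∫ t in (0:ℝ)..1, gaussDens d σ (x - C t)

/-!
With respect to the centred Gaussian `φ_σ`, translation by `a` has likelihood ratio
`exp (⟪x, a⟫ / σ² - ‖a‖² / (2σ²))`. Two facts follow. First, by Jensen's inequality a mixture
`p_X = 𝔼 φ_σ(· - X)` with `𝔼 X = 0` and `‖X‖ ≤ R` is at least `exp (-R² / (2σ²)) φ_σ`, so the
denominator of the χ² integrand may be replaced by `φ_σ`. Secondly, the inner product of `p_X` and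
`p_Y` in `L²(1 / φ_σ)` is `𝔼 exp (⟪X, Y'⟫ / σ²)` with `Y'` an independent copy of `Y`, and expanding
the exponential gives
`∫ (p_X - p_Y)² / φ_σ = ∑ₖ ‖𝔼 X^{⊗k} - 𝔼 Y^{⊗k}‖² / (σ^{2k} k!)`.
Matching moments remove the terms `k < ℓ`, and in the others
`‖𝔼 X^{⊗k} - 𝔼 Y^{⊗k}‖² ≤ 𝔼 ‖X^{⊗k} - Y^{⊗k}‖² ≤ k² 𝔼 ‖X - Y‖²` when `R = 1`.
-/

open scoped RealInnerProductSpace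

section GaussianDensity

variable (d : ℕ) {σ : ℝ}

lemma gaussDens_pos (hσ : σ ≠ 0) (x : EuclideanSpace ℝ (Fin d)) : 0 < gaussDens d σ x := by
  have := Real.pi_pos
  unfold gaussDens
  positivity

lemma continuous_gaussDens (σ : ℝ) : Continuous (gaussDens d σ) := by
  unfold gaussDens
  fun_prop

lemma integral_gaussDens (hσ : σ ≠ 0) : ∫ x, gaussDens d σ x = 1 := by
  have hexp (v : EuclideanSpace ℝ (Fin d)) :
      -‖v‖ ^ 2 / (2 * σ ^ 2) = -(1 / (2 * σ ^ 2)) * ‖v‖ ^ 2 := by ring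
  have hbase : Real.pi / (1 / (2 * σ ^ 2)) = 2 * Real.pi * σ ^ 2 := by field_simp
  have hpos : 0 < 2 * Real.pi * σ ^ 2 := by have := Real.pi_pos; positivity
  simp only [gaussDens, integral_const_mul, hexp]
  rw [GaussianFourier.integral_rexp_neg_mul_sq_norm (by positivity), hbase,
    finrank_euclideanSpace_fin, ← Real.rpow_add hpos, neg_div, neg_add_cancel, Real.rpow_zero]

lemma integrable_gaussDens (hσ : σ ≠ 0) : Integrable (gaussDens d σ) :=
  .of_integral_ne_zero (integral_gaussDens d hσ ▸ one_ne_zero)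

lemma gaussDens_sub (σ : ℝ) (x a : EuclideanSpace ℝ (Fin d)) :
    gaussDens d σ (x - a)
      = gaussDens d σ x * Real.exp (⟪x, a⟫ / σ ^ 2 - ‖a‖ ^ 2 / (2 * σ ^ 2)) := by
  rw [gaussDens, gaussDens, mul_assoc (_ ^ _), ← Real.exp_add, norm_sub_sq_real]
  congr 2
  ring

lemma gaussDens_sub_mul_gaussDens_sub_div (hσ : σ ≠ 0) (x a b : EuclideanSpace ℝ (Fin d)) :
    gaussDens d σ (x - a) * gaussDens d σ (x - b) / gaussDens d σ x
      = gaussDens d σ (x - (a + b)) * Real.exp (⟪a, b⟫ / σ ^ 2) := by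
  have hx := (gaussDens_pos d hσ x).ne'
  rw [gaussDens_sub, gaussDens_sub, gaussDens_sub, mul_mul_mul_comm, mul_assoc, mul_assoc,
    mul_div_cancel_left₀ _ hx, ← Real.exp_add, ← Real.exp_add, norm_add_sq_real, inner_add_right]
  congr 2
  ring

end GaussianDensity

section TranslatedMixture

variable {G α : Type*} [AddGroup G] [TopologicalSpace G] [IsTopologicalAddGroup G]
  [TopologicalSpace.PseudoMetrizableSpace G] [SecondCountableTopology G] [MeasurableSpace G]
  [BorelSpace G] {ν : Measure G} [SFinite ν] [ν.IsAddRightInvariant]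
  [MeasurableSpace α] {μ : Measure α} [SFinite μ]

lemma integrable_comp_sub_mul {g : G → ℝ} (hgc : Continuous g) (hg : Integrable g ν) {h : α → G}
    (hh : AEStronglyMeasurable h μ) {w : α → ℝ} (hw : Integrable w μ) :
    Integrable (fun p : G × α => g (p.1 - h p.2) * w p.2) (ν.prod μ) := by
  have hmeas : AEStronglyMeasurable (fun p : G × α => g (p.1 - h p.2) * w p.2) (ν.prod μ) :=
    (hgc.comp_aestronglyMeasurable
      (aestronglyMeasurable_id.comp_fst.sub hh.comp_snd)).mul hw.1.comp_snd
  rw [integrable_prod_iff' hmeas]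
  refine ⟨ae_of_all _ fun z => (hg.comp_sub_right (h z)).mul_const (w z), ?_⟩
  simp only [norm_mul, integral_mul_const, integral_sub_right_eq_self fun x => ‖g x‖]
  exact hw.norm.const_mul _

end TranslatedMixture

section Coordinates

variable {ι : Type*} [Fintype ι]

lemma inner_pow_eq_sum (a b : EuclideanSpace ℝ ι) (k : ℕ) :
    ⟪a, b⟫ ^ k = ∑ j : Fin k → ι, (∏ i, a (j i)) * ∏ i, b (j i) := by
  simp only [PiLp.inner_apply, Fintype.sum_pow, Finset.prod_mul_distrib, RCLike.inner_apply,
    conj_trivial, mul_comm]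

lemma abs_prod_apply_le {a : EuclideanSpace ℝ ι} {R : ℝ} (ha : ‖a‖ ≤ R) {k : ℕ} (j : Fin k → ι) :
    |∏ i, a (j i)| ≤ R ^ k := by
  calc |∏ i, a (j i)| = ∏ i, ‖a (j i)‖ := Finset.abs_prod ..
    _ ≤ ∏ _i : Fin k, R := by
      gcongr
      exact (PiLp.norm_apply_le a _).trans ha
    _ = R ^ k := Fin.prod_const k R

lemma abs_pow_sub_pow_le_of_abs_le {A : Type*} [CommRing A] [LinearOrder A] [IsOrderedRing A]
    {p q R : A} (hp : |p| ≤ R) (hq : |q| ≤ R) (k : ℕ) :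
    |p ^ k - q ^ k| ≤ |p - q| * k * R ^ (k - 1) :=
  (abs_pow_sub_pow_le p q k).trans <| by
    gcongr
    exact max_le hp hq

lemma sum_sub_sq_eq {κ A : Type*} [CommRing A] (s : Finset κ) (f g : κ → A) :
    ∑ j ∈ s, (f j - g j) ^ 2
      = ∑ j ∈ s, f j * f j - 2 * ∑ j ∈ s, f j * g j + ∑ j ∈ s, g j * g j := by
  rw [Finset.mul_sum, ← Finset.sum_sub_distrib, ← Finset.sum_add_distrib]
  exact Finset.sum_congr rfl fun j _ => by ring

lemma sum_sq_prod_sub_prod_eq (a b : EuclideanSpace ℝ ι) (k : ℕ) :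
    ∑ j : Fin k → ι, (∏ i, a (j i) - ∏ i, b (j i)) ^ 2
      = (‖a‖ ^ k - ‖b‖ ^ k) ^ 2 + 2 * ((‖a‖ * ‖b‖) ^ k - ⟪a, b⟫ ^ k) := by
  rw [sum_sub_sq_eq]
  simp only [← inner_pow_eq_sum]
  rw [real_inner_self_eq_norm_sq, real_inner_self_eq_norm_sq]
  ring

lemma sum_sq_prod_sub_prod_le {a b : EuclideanSpace ℝ ι} {R : ℝ} (ha : ‖a‖ ≤ R) (hb : ‖b‖ ≤ R)
    (k : ℕ) :
    ∑ j : Fin k → ι, (∏ i, a (j i) - ∏ i, b (j i)) ^ 2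
      ≤ (k * R ^ (k - 1)) ^ 2 * ‖a - b‖ ^ 2 := by
  have hR : 0 ≤ R := (norm_nonneg a).trans ha
  have hab : |⟪a, b⟫| ≤ ‖a‖ * ‖b‖ := abs_real_inner_le_norm a b
  have hR2 : ‖a‖ * ‖b‖ ≤ R ^ 2 := sq R ▸ mul_le_mul ha hb (norm_nonneg b) hR
  have hgap : 0 ≤ ‖a‖ * ‖b‖ - ⟪a, b⟫ := sub_nonneg.2 ((le_abs_self _).trans hab)
  have hnorms : (‖a‖ ^ k - ‖b‖ ^ k) ^ 2 ≤ (k * R ^ (k - 1)) ^ 2 * (‖a‖ - ‖b‖) ^ 2 := by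
    rw [← mul_pow, ← sq_abs, ← sq_abs (_ * (‖a‖ - ‖b‖)), abs_mul,
      abs_of_nonneg (show 0 ≤ k * R ^ (k - 1) by positivity)]
    gcongr
    exact (abs_pow_sub_pow_le_of_abs_le (by simpa) (by simpa) k).trans_eq (by ring)
  have hangle : (‖a‖ * ‖b‖) ^ k - ⟪a, b⟫ ^ k
      ≤ (k * R ^ (k - 1)) ^ 2 * (‖a‖ * ‖b‖ - ⟪a, b⟫) := by
    have hk : (k : ℝ) ≤ k ^ 2 := mod_cast Nat.le_self_pow two_ne_zero k
    calc (‖a‖ * ‖b‖) ^ k - ⟪a, b⟫ ^ k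
        ≤ (‖a‖ * ‖b‖ - ⟪a, b⟫) * k * (R ^ 2) ^ (k - 1) := by
          rw [← abs_of_nonneg hgap]
          exact (le_abs_self _).trans
            (abs_pow_sub_pow_le_of_abs_le ((abs_of_nonneg (by positivity)).trans_le hR2)
              (hab.trans hR2) k)
      _ ≤ (‖a‖ * ‖b‖ - ⟪a, b⟫) * k ^ 2 * (R ^ 2) ^ (k - 1) := by gcongr
      _ = _ := by ring
  rw [sum_sq_prod_sub_prod_eq, norm_sub_sq_real]
  linarith

end Coordinates

section Moments

variable {Ω Ω' ι : Type*} [MeasurableSpace Ω] [MeasurableSpace Ω'] [Fintype ι]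
  {P : Measure Ω} {Q : Measure Ω'} {X : Ω → EuclideanSpace ℝ ι} {Y : Ω' → EuclideanSpace ℝ ι}
  {R S : ℝ}

/-- The coordinate `𝔼 [X_{j₁} ⋯ X_{jₖ}]` of the `k`-th moment tensor of a random vector `X`. -/
def mixedMoment (P : Measure Ω) (X : Ω → EuclideanSpace ℝ ι) {k : ℕ} (j : Fin k → ι) : ℝ :=
  ∫ ω, ∏ i, X ω (j i) ∂P

/-- The squared Hilbert–Schmidt distance `‖𝔼 X^{⊗k} - 𝔼 Y^{⊗k}‖²` between the `k`-th moment tensors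
of two random vectors, possibly on different probability spaces. -/
def momentDistSq (P : Measure Ω) (Q : Measure Ω') (X : Ω → EuclideanSpace ℝ ι)
    (Y : Ω' → EuclideanSpace ℝ ι) (k : ℕ) : ℝ :=
  ∑ j : Fin k → ι, (mixedMoment P X j - mixedMoment Q Y j) ^ 2

lemma momentDistSq_nonneg (k : ℕ) : 0 ≤ momentDistSq P Q X Y k :=
  Finset.sum_nonneg fun _ _ => sq_nonneg _

variable [IsFiniteMeasure P] [IsFiniteMeasure Q]

lemma integrable_prod_apply (hX : AEStronglyMeasurable X P) (hXb : ∀ᵐ ω ∂P, ‖X ω‖ ≤ R) {k : ℕ}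
    (j : Fin k → ι) : Integrable (fun ω => ∏ i, X ω (j i)) P := by
  refine .of_bound ?_ (R ^ k) (hXb.mono fun ω hω => abs_prod_apply_le hω j)
  exact (show Continuous fun a : EuclideanSpace ℝ ι => ∏ i, a (j i) by
    fun_prop).comp_aestronglyMeasurable hX

lemma integral_inner_pow (hX : AEStronglyMeasurable X P) (hY : AEStronglyMeasurable Y Q)
    (hXb : ∀ᵐ ω ∂P, ‖X ω‖ ≤ R) (hYb : ∀ᵐ ω ∂Q, ‖Y ω‖ ≤ S) (k : ℕ) :
    ∫ z, ⟪X z.1, Y z.2⟫ ^ k ∂P.prod Q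
      = ∑ j : Fin k → ι, mixedMoment P X j * mixedMoment Q Y j := by
  simp only [inner_pow_eq_sum]
  rw [integral_finsetSum _ fun j _ =>
    (integrable_prod_apply hX hXb j).mul_prod (integrable_prod_apply hY hYb j)]
  exact Finset.sum_congr rfl fun j _ =>
    integral_prod_mul (fun ω => ∏ i, X ω (j i)) fun ω => ∏ i, Y ω (j i)

end Moments

lemma momentDistSq_le {Ω ι : Type*} [MeasurableSpace Ω] [Fintype ι] {P : Measure Ω}
    [IsProbabilityMeasure P] {X Y : Ω → EuclideanSpace ℝ ι} {R : ℝ}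
    (hX : AEStronglyMeasurable X P) (hY : AEStronglyMeasurable Y P)
    (hXb : ∀ᵐ ω ∂P, ‖X ω‖ ≤ R) (hYb : ∀ᵐ ω ∂P, ‖Y ω‖ ≤ R) (k : ℕ) :
    momentDistSq P P X Y k ≤ (k * R ^ (k - 1)) ^ 2 * ∫ ω, ‖X ω - Y ω‖ ^ 2 ∂P := by
  have hint (j : Fin k → ι) : MemLp (fun ω => ∏ i, X ω (j i) - ∏ i, Y ω (j i)) 2 P := by
    refine .of_bound ((integrable_prod_apply hX hXb j).sub (integrable_prod_apply hY hYb j)).1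
      (R ^ k + R ^ k) ?_
    filter_upwards [hXb, hYb] with ω hXω hYω
    exact (abs_sub _ _).trans (add_le_add (abs_prod_apply_le hXω j) (abs_prod_apply_le hYω j))
  have hdist : Integrable (fun ω => ‖X ω - Y ω‖ ^ 2) P := by
    refine (MemLp.of_bound (hX.sub hY) (R + R) ?_).integrable_norm_pow two_ne_zero
    filter_upwards [hXb, hYb] with ω hXω hYω using norm_sub_le_of_le hXω hYω
  calc momentDistSq P P X Y k
      ≤ ∑ j : Fin k → ι, ∫ ω, (∏ i, X ω (j i) - ∏ i, Y ω (j i)) ^ 2 ∂P := by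
        refine Finset.sum_le_sum fun j _ => ?_
        rw [mixedMoment, mixedMoment,
          ← integral_sub (integrable_prod_apply hX hXb j) (integrable_prod_apply hY hYb j)]
        exact even_two.convexOn_pow.map_integral_le (continuous_pow 2).continuousOn isClosed_univ
          (ae_of_all _ fun _ => mem_univ _) ((hint j).integrable one_le_two)
          (hint j).integrable_sq
    _ = ∫ ω, ∑ j : Fin k → ι, (∏ i, X ω (j i) - ∏ i, Y ω (j i)) ^ 2 ∂P :=
        (integral_finsetSum _ fun j _ => (hint j).integrable_sq).symm
    _ ≤ ∫ ω, (k * R ^ (k - 1)) ^ 2 * ‖X ω - Y ω‖ ^ 2 ∂P := by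
        refine integral_mono_ae (integrable_finsetSum _ fun j _ => (hint j).integrable_sq)
          (hdist.const_mul _) ?_
        filter_upwards [hXb, hYb] with ω hXω hYω using sum_sq_prod_sub_prod_le hXω hYω k
    _ = _ := integral_const_mul _ _

section ExponentialMoments

lemma exp_integral_le_integral_exp {α : Type*} [MeasurableSpace α] {μ : Measure α}
    [IsProbabilityMeasure μ] {f : α → ℝ} (hf : Integrable f μ) {c : ℝ} (hfc : ∀ᵐ x ∂μ, f x ≤ c) :
    Real.exp (∫ x, f x ∂μ) ≤ ∫ x, Real.exp (f x) ∂μ := by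
  have hexp : Integrable (fun x => Real.exp (f x)) μ := by
    simpa only [one_mul] using
      ProbabilityTheory.integrable_exp_mul_of_le 1 c zero_le_one hf.aemeasurable hfc
  exact convexOn_exp.map_integral_le Real.continuous_exp.continuousOn isClosed_univ
    (ae_of_all _ fun _ => mem_univ _) hf hexp

lemma hasSum_integral_pow_div_factorial {α : Type*} [MeasurableSpace α] {μ : Measure α}
    [IsFiniteMeasure μ] {f : α → ℝ} (hf : AEStronglyMeasurable f μ) {c : ℝ}
    (hfc : ∀ᵐ x ∂μ, |f x| ≤ c) :
    HasSum (fun k : ℕ => (∫ x, f x ^ k ∂μ) / k.factorial) (∫ x, Real.exp (f x) ∂μ) := by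
  simp only [← integral_div]
  refine hasSum_integral_of_dominated_convergence (fun k _ => c ^ k / k.factorial)
    (fun k => by fun_prop) (fun k => ?_)
    (ae_of_all _ fun _ => Real.summable_pow_div_factorial c) (integrable_const _)
    (ae_of_all _ fun x => ?_)
  · filter_upwards [hfc] with x hx
    rw [norm_div, norm_pow, Real.norm_eq_abs, RCLike.norm_natCast]
    gcongr
  · rw [Real.exp_eq_exp_ℝ]
    exact NormedSpace.expSeries_div_hasSum_exp (f x)

variable {Ω Ω' ι : Type*} [MeasurableSpace Ω] [MeasurableSpace Ω'] [Fintype ι]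
  {P : Measure Ω} {Q : Measure Ω'} {X : Ω → EuclideanSpace ℝ ι} {Y : Ω' → EuclideanSpace ℝ ι}
  {R S : ℝ}

lemma ae_prod_abs_inner_le (hXb : ∀ᵐ ω ∂P, ‖X ω‖ ≤ R) (hYb : ∀ᵐ ω ∂Q, ‖Y ω‖ ≤ S) :
    ∀ᵐ z ∂P.prod Q, |⟪X z.1, Y z.2⟫| ≤ R * S := by
  filter_upwards [Measure.quasiMeasurePreserving_fst.ae hXb,
    Measure.quasiMeasurePreserving_snd.ae hYb] with z hXz hYz
  exact (abs_real_inner_le_norm _ _).trans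
    (mul_le_mul hXz hYz (norm_nonneg _) ((norm_nonneg _).trans hXz))

variable [IsFiniteMeasure P] [IsFiniteMeasure Q]

lemma hasSum_integral_exp_inner (hX : AEStronglyMeasurable X P) (hY : AEStronglyMeasurable Y Q)
    (hXb : ∀ᵐ ω ∂P, ‖X ω‖ ≤ R) (hYb : ∀ᵐ ω ∂Q, ‖Y ω‖ ≤ S) (σ : ℝ) :
    HasSum (fun k : ℕ => (∑ j : Fin k → ι, mixedMoment P X j * mixedMoment Q Y j)
        / (σ ^ (2 * k) * k.factorial))
      (∫ z, Real.exp (⟪X z.1, Y z.2⟫ / σ ^ 2) ∂P.prod Q) := by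
  have hmeas : AEStronglyMeasurable (fun z => ⟪X z.1, Y z.2⟫) (P.prod Q) :=
    hX.comp_fst.inner hY.comp_snd
  have hbound : ∀ᵐ z ∂P.prod Q, |⟪X z.1, Y z.2⟫ / σ ^ 2| ≤ R * S / σ ^ 2 := by
    filter_upwards [ae_prod_abs_inner_le hXb hYb] with z hz
    rw [abs_div, abs_of_nonneg (sq_nonneg σ)]
    gcongr
  simpa only [div_pow, ← pow_mul, integral_div, integral_inner_pow hX hY hXb hYb, div_div]
    using hasSum_integral_pow_div_factorial (by fun_prop) hbound

end ExponentialMoments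

section GaussianMixture

variable {Ω Ω' : Type*} [MeasurableSpace Ω] [MeasurableSpace Ω'] {d : ℕ} {P : Measure Ω}
  {Q : Measure Ω'} {X : Ω → EuclideanSpace ℝ (Fin d)} {Y : Ω' → EuclideanSpace ℝ (Fin d)}
  {σ R S : ℝ}

/-- The density `x ↦ 𝔼 φ_σ(x - X)` of `X + σξ`, with `ξ ~ N(0, I_d)` independent of the random
vector `X`. A noisy curve is the case of the curve as a random vector on `(0, 1]`. -/
def gaussMixture (P : Measure Ω) (X : Ω → EuclideanSpace ℝ (Fin d)) (σ : ℝ)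
    (x : EuclideanSpace ℝ (Fin d)) : ℝ :=
  ∫ ω, gaussDens d σ (x - X ω) ∂P

lemma noisyDens_eq_gaussMixture (C : ℝ → EuclideanSpace ℝ (Fin d)) (σ : ℝ) :
    noisyDens C σ = gaussMixture (volume.restrict (Ioc 0 1)) C σ :=
  funext fun _ => intervalIntegral.integral_of_le zero_le_one

lemma gaussMixture_mul_div_gaussDens (P : Measure Ω) (Q : Measure Ω') [SFinite P] [SFinite Q]
    (X : Ω → EuclideanSpace ℝ (Fin d)) (Y : Ω' → EuclideanSpace ℝ (Fin d))
    (hσ : σ ≠ 0) (x : EuclideanSpace ℝ (Fin d)) :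
    gaussMixture P X σ x * gaussMixture Q Y σ x / gaussDens d σ x
      = ∫ z, gaussDens d σ (x - (X z.1 + Y z.2)) * Real.exp (⟪X z.1, Y z.2⟫ / σ ^ 2)
          ∂P.prod Q := by
  simp only [← gaussDens_sub_mul_gaussDens_sub_div d hσ, integral_div]
  rw [integral_prod_mul (fun ω => gaussDens d σ (x - X ω)) fun ω => gaussDens d σ (x - Y ω)]
  rfl

lemma sq_gaussMixture_sub_div_gaussDens (x : EuclideanSpace ℝ (Fin d)) :
    (gaussMixture P X σ x - gaussMixture Q Y σ x) ^ 2 / gaussDens d σ x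
      = gaussMixture P X σ x * gaussMixture P X σ x / gaussDens d σ x
        - 2 * (gaussMixture P X σ x * gaussMixture Q Y σ x / gaussDens d σ x)
        + gaussMixture Q Y σ x * gaussMixture Q Y σ x / gaussDens d σ x := by
  ring

section FiniteMeasure

variable [IsFiniteMeasure P] [IsFiniteMeasure Q]

lemma integrable_gaussDens_sub_mul_exp_inner (hσ : σ ≠ 0) (hX : AEStronglyMeasurable X P)
    (hY : AEStronglyMeasurable Y Q) (hXb : ∀ᵐ ω ∂P, ‖X ω‖ ≤ R) (hYb : ∀ᵐ ω ∂Q, ‖Y ω‖ ≤ S) :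
    Integrable (fun p : EuclideanSpace ℝ (Fin d) × (Ω × Ω') =>
      gaussDens d σ (p.1 - (X p.2.1 + Y p.2.2)) * Real.exp (⟪X p.2.1, Y p.2.2⟫ / σ ^ 2))
      (volume.prod (P.prod Q)) := by
  have hexp : Integrable (fun z => Real.exp (⟪X z.1, Y z.2⟫ / σ ^ 2)) (P.prod Q) := by
    simpa only [div_eq_inv_mul] using ProbabilityTheory.integrable_exp_mul_of_mem_Icc
      (hX.comp_fst.inner hY.comp_snd).aemeasurable
      ((ae_prod_abs_inner_le hXb hYb).mono fun _ => abs_le.1)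
  exact integrable_comp_sub_mul (continuous_gaussDens d σ) (integrable_gaussDens d hσ)
    (hX.comp_fst.add hY.comp_snd) hexp

lemma integrable_gaussMixture_mul_div_gaussDens (hσ : σ ≠ 0) (hX : AEStronglyMeasurable X P)
    (hY : AEStronglyMeasurable Y Q) (hXb : ∀ᵐ ω ∂P, ‖X ω‖ ≤ R) (hYb : ∀ᵐ ω ∂Q, ‖Y ω‖ ≤ S) :
    Integrable fun x => gaussMixture P X σ x * gaussMixture Q Y σ x / gaussDens d σ x := by
  simp only [gaussMixture_mul_div_gaussDens P Q X Y hσ]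
  exact (integrable_gaussDens_sub_mul_exp_inner hσ hX hY hXb hYb).integral_prod_left

lemma integral_gaussMixture_mul_div_gaussDens (hσ : σ ≠ 0) (hX : AEStronglyMeasurable X P)
    (hY : AEStronglyMeasurable Y Q) (hXb : ∀ᵐ ω ∂P, ‖X ω‖ ≤ R) (hYb : ∀ᵐ ω ∂Q, ‖Y ω‖ ≤ S) :
    ∫ x, gaussMixture P X σ x * gaussMixture Q Y σ x / gaussDens d σ x
      = ∫ z, Real.exp (⟪X z.1, Y z.2⟫ / σ ^ 2) ∂P.prod Q := by
  simp only [gaussMixture_mul_div_gaussDens P Q X Y hσ]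
  rw [integral_integral_swap (integrable_gaussDens_sub_mul_exp_inner hσ hX hY hXb hYb)]
  simp only [integral_mul_const, integral_sub_right_eq_self (gaussDens d σ),
    integral_gaussDens d hσ, one_mul]

lemma integrable_sq_gaussMixture_sub_div_gaussDens (hσ : σ ≠ 0)
    (hX : AEStronglyMeasurable X P) (hY : AEStronglyMeasurable Y Q)
    (hXb : ∀ᵐ ω ∂P, ‖X ω‖ ≤ R) (hYb : ∀ᵐ ω ∂Q, ‖Y ω‖ ≤ S) :
    Integrable fun x =>
      (gaussMixture P X σ x - gaussMixture Q Y σ x) ^ 2 / gaussDens d σ x := by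
  simp only [sq_gaussMixture_sub_div_gaussDens]
  exact ((integrable_gaussMixture_mul_div_gaussDens hσ hX hX hXb hXb).sub
    ((integrable_gaussMixture_mul_div_gaussDens hσ hX hY hXb hYb).const_mul 2)).add
    (integrable_gaussMixture_mul_div_gaussDens hσ hY hY hYb hYb)

lemma hasSum_integral_sq_gaussMixture_sub_div_gaussDens (hσ : σ ≠ 0)
    (hX : AEStronglyMeasurable X P) (hY : AEStronglyMeasurable Y Q)
    (hXb : ∀ᵐ ω ∂P, ‖X ω‖ ≤ R) (hYb : ∀ᵐ ω ∂Q, ‖Y ω‖ ≤ S) :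
    HasSum (fun k : ℕ => momentDistSq P Q X Y k / (σ ^ (2 * k) * k.factorial))
      (∫ x, (gaussMixture P X σ x - gaussMixture Q Y σ x) ^ 2 / gaussDens d σ x) := by
  have iXX := integrable_gaussMixture_mul_div_gaussDens hσ hX hX hXb hXb
  have iXY := (integrable_gaussMixture_mul_div_gaussDens hσ hX hY hXb hYb).const_mul 2
  have iYY := integrable_gaussMixture_mul_div_gaussDens hσ hY hY hYb hYb
  simp only [sq_gaussMixture_sub_div_gaussDens]
  rw [integral_add (iXX.sub' iXY) iYY, integral_sub iXX iXY, integral_const_mul,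
    integral_gaussMixture_mul_div_gaussDens hσ hX hX hXb hXb,
    integral_gaussMixture_mul_div_gaussDens hσ hX hY hXb hYb,
    integral_gaussMixture_mul_div_gaussDens hσ hY hY hYb hYb]
  simpa only [momentDistSq, sum_sub_sq_eq, sub_div, add_div, mul_div_assoc] using
    ((hasSum_integral_exp_inner hX hX hXb hXb σ).sub
      ((hasSum_integral_exp_inner hX hY hXb hYb σ).mul_left 2)).add
      (hasSum_integral_exp_inner hY hY hYb hYb σ)

end FiniteMeasure

lemma exp_mul_gaussDens_le_gaussMixture [IsProbabilityMeasure P] (hσ : σ ≠ 0)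
    (hX : AEStronglyMeasurable X P) (hX0 : ∫ ω, X ω ∂P = 0) (hXb : ∀ᵐ ω ∂P, ‖X ω‖ ≤ R)
    (x : EuclideanSpace ℝ (Fin d)) :
    Real.exp (-(R ^ 2 / (2 * σ ^ 2))) * gaussDens d σ x ≤ gaussMixture P X σ x := by
  set L : Ω → ℝ := fun ω => ⟪x, X ω⟫ / σ ^ 2 - ‖X ω‖ ^ 2 / (2 * σ ^ 2)
  have hXmem (p : ENNReal) : MemLp X p P := .of_bound hX R hXb
  have hXi : Integrable X P := (hXmem 1).integrable le_rfl
  have hsq : Integrable (fun ω => ‖X ω‖ ^ 2) P := (hXmem 2).integrable_norm_pow two_ne_zero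
  have hinner : Integrable (fun ω => ⟪x, X ω⟫) P := hXi.const_inner x
  have hL : Integrable L P := (hinner.div_const _).sub (hsq.div_const _)
  have hLb : ∀ᵐ ω ∂P, L ω ≤ ‖x‖ * R / σ ^ 2 := by
    filter_upwards [hXb] with ω hω
    calc L ω ≤ ⟪x, X ω⟫ / σ ^ 2 := sub_le_self _ (by positivity)
      _ ≤ ‖x‖ * R / σ ^ 2 := by
        gcongr
        exact (real_inner_le_norm _ _).trans (by gcongr)
  have hmean : -(R ^ 2 / (2 * σ ^ 2)) ≤ ∫ ω, L ω ∂P := by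
    have hsqle : ∫ ω, ‖X ω‖ ^ 2 ∂P ≤ R ^ 2 := by
      simpa using integral_mono_ae hsq (integrable_const (R ^ 2))
        (hXb.mono fun ω hω => pow_le_pow_left₀ (norm_nonneg _) hω 2)
    rw [integral_sub (hinner.div_const _) (hsq.div_const _), integral_div, integral_div,
      integral_inner hXi, hX0, inner_zero_right, zero_div, zero_sub]
    gcongr
  calc Real.exp (-(R ^ 2 / (2 * σ ^ 2))) * gaussDens d σ x
      ≤ (∫ ω, Real.exp (L ω) ∂P) * gaussDens d σ x := by
        gcongr
        · exact (gaussDens_pos d hσ x).le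
        · exact (Real.exp_le_exp.2 hmean).trans (exp_integral_le_integral_exp hL hLb)
    _ = gaussMixture P X σ x := by
        rw [mul_comm, ← integral_const_mul]
        exact integral_congr_ae (ae_of_all _ fun ω => (gaussDens_sub d σ x (X ω)).symm)

theorem integral_sq_gaussMixture_sub_div_le [IsProbabilityMeasure P] [IsFiniteMeasure Q]
    (hσ : σ ≠ 0) (hX : AEStronglyMeasurable X P) (hY : AEStronglyMeasurable Y Q)
    (hX0 : ∫ ω, X ω ∂P = 0) (hXb : ∀ᵐ ω ∂P, ‖X ω‖ ≤ R) (hYb : ∀ᵐ ω ∂Q, ‖Y ω‖ ≤ S) :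
    ∫ x, (gaussMixture P X σ x - gaussMixture Q Y σ x) ^ 2 / gaussMixture P X σ x
      ≤ Real.exp (R ^ 2 / (2 * σ ^ 2))
        * ∑' k : ℕ, momentDistSq P Q X Y k / (σ ^ (2 * k) * k.factorial) := by
  have hφ := gaussDens_pos d hσ
  have hlow (x) : 0 < Real.exp (-(R ^ 2 / (2 * σ ^ 2))) * gaussDens d σ x :=
    mul_pos (Real.exp_pos _) (hφ x)
  have hle := exp_mul_gaussDens_le_gaussMixture hσ hX hX0 hXb
  rw [(hasSum_integral_sq_gaussMixture_sub_div_gaussDens hσ hX hY hXb hYb).tsum_eq,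
    ← integral_const_mul]
  refine integral_mono_of_nonneg
    (ae_of_all _ fun x => div_nonneg (sq_nonneg _) ((hlow x).le.trans (hle x)))
    ((integrable_sq_gaussMixture_sub_div_gaussDens hσ hX hY hXb hYb).const_mul _)
    (ae_of_all _ fun x => ?_)
  calc _ ≤ (gaussMixture P X σ x - gaussMixture Q Y σ x) ^ 2
        / (Real.exp (-(R ^ 2 / (2 * σ ^ 2))) * gaussDens d σ x) :=
        div_le_div_of_nonneg_left (sq_nonneg _) (hlow x) (hle x)
    _ = _ := by rw [Real.exp_neg, ← div_div, div_inv_eq_mul, mul_comm, mul_div_assoc]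

end GaussianMixture

lemma sq_le_six_mul_two_pow (k : ℕ) : (k : ℝ) ^ 2 ≤ 6 * 2 ^ k := by
  have h (k : ℕ) : k ^ 2 + 2 * k + 3 ≤ 6 * 2 ^ k := by
    induction k with
    | zero => norm_num
    | succ n ih => rw [pow_succ 2 n]; nlinarith
  exact_mod_cast (by have := h k; omega : k ^ 2 ≤ 6 * 2 ^ k)

section MatchingMoments

variable {Ω : Type*} [MeasurableSpace Ω] {P : Measure Ω} [IsProbabilityMeasure P]

lemma momentDistSq_eq_zero {Ω' ι : Type*} [MeasurableSpace Ω'] [Fintype ι] {Q : Measure Ω'}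
    [IsProbabilityMeasure Q] {X : Ω → EuclideanSpace ℝ ι} {Y : Ω' → EuclideanSpace ℝ ι} {k : ℕ}
    (hmom : 1 ≤ k → ∀ j : Fin k → ι, mixedMoment P X j = mixedMoment Q Y j) :
    momentDistSq P Q X Y k = 0 := by
  refine Finset.sum_eq_zero fun j _ => ?_
  rw [sq_eq_zero_iff, sub_eq_zero]
  rcases Nat.eq_zero_or_pos k with rfl | hk
  · simp [mixedMoment]
  · exact hmom hk j

lemma momentDistSq_div_le {ι : Type*} [Fintype ι] {X Y : Ω → EuclideanSpace ℝ ι}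
    (hX : AEStronglyMeasurable X P) (hY : AEStronglyMeasurable Y P)
    (hXb : ∀ᵐ ω ∂P, ‖X ω‖ ≤ 1) (hYb : ∀ᵐ ω ∂P, ‖Y ω‖ ≤ 1) {σ : ℝ} (hσ : 1 ≤ σ) {ℓ k : ℕ}
    (hk : ℓ ≤ k) :
    momentDistSq P P X Y k / (σ ^ (2 * k) * k.factorial)
      ≤ 6 * (∫ ω, ‖X ω - Y ω‖ ^ 2 ∂P) / σ ^ (2 * ℓ) * (2 ^ k / k.factorial) := by
  have hmoment : momentDistSq P P X Y k ≤ 6 * 2 ^ k * ∫ ω, ‖X ω - Y ω‖ ^ 2 ∂P :=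
    calc momentDistSq P P X Y k ≤ (k : ℝ) ^ 2 * ∫ ω, ‖X ω - Y ω‖ ^ 2 ∂P := by
          simpa using momentDistSq_le hX hY hXb hYb k
      _ ≤ _ := by gcongr; exact sq_le_six_mul_two_pow k
  calc _ ≤ 6 * 2 ^ k * (∫ ω, ‖X ω - Y ω‖ ^ 2 ∂P) / (σ ^ (2 * ℓ) * k.factorial) := by
        gcongr
    _ = _ := by ring

lemma tsum_momentDistSq_div_le {ι : Type*} [Fintype ι] {X Y : Ω → EuclideanSpace ℝ ι}
    (hX : AEStronglyMeasurable X P) (hY : AEStronglyMeasurable Y P)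
    (hXb : ∀ᵐ ω ∂P, ‖X ω‖ ≤ 1) (hYb : ∀ᵐ ω ∂P, ‖Y ω‖ ≤ 1) {ℓ : ℕ}
    (hmom : ∀ k : ℕ, 1 ≤ k → k ≤ ℓ - 1 → ∀ j : Fin k → ι, mixedMoment P X j = mixedMoment P Y j)
    {σ : ℝ} (hσ : 1 ≤ σ) :
    ∑' k : ℕ, momentDistSq P P X Y k / (σ ^ (2 * k) * k.factorial)
      ≤ 6 * (∑' k : ℕ, (2 : ℝ) ^ (ℓ + k) / (Nat.factorial (ℓ + k))) / σ ^ (2 * ℓ)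
        * ∫ ω, ‖X ω - Y ω‖ ^ 2 ∂P := by
  set ρ := ∫ ω, ‖X ω - Y ω‖ ^ 2 ∂P
  set f : ℕ → ℝ := fun k => momentDistSq P P X Y k / (σ ^ (2 * k) * k.factorial)
  have hf0 (k : ℕ) : 0 ≤ f k := div_nonneg (momentDistSq_nonneg k) (by positivity)
  have hvanish : Function.support f ⊆ range (ℓ + ·) := fun k hk => by
    by_contra hkℓ
    have hlt : k < ℓ := not_le.1 fun h => hkℓ ⟨k - ℓ, Nat.add_sub_of_le h⟩
    exact hk (by simp only [f, momentDistSq_eq_zero fun h1 => hmom k h1 (by omega), zero_div])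
  have hterm (k : ℕ) : f (ℓ + k) ≤ 6 * ρ / σ ^ (2 * ℓ) * (2 ^ (ℓ + k) / (ℓ + k).factorial) :=
    momentDistSq_div_le hX hY hXb hYb hσ (Nat.le_add_right ℓ k)
  have hs : Summable fun k : ℕ => (2 : ℝ) ^ (ℓ + k) / (ℓ + k).factorial :=
    (Real.summable_pow_div_factorial 2).comp_injective (add_right_injective ℓ)
  calc ∑' k, f k = ∑' k, f (ℓ + k) := ((add_right_injective ℓ).tsum_eq hvanish).symm
    _ ≤ ∑' k, 6 * ρ / σ ^ (2 * ℓ) * (2 ^ (ℓ + k) / (ℓ + k).factorial) :=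
      (Summable.of_nonneg_of_le (fun _ => hf0 _) hterm (hs.mul_left _)).tsum_le_tsum hterm
        (hs.mul_left _)
    _ = _ := by rw [tsum_mul_left]; ring

theorem chi_squared_moment_bound_general {d : ℕ} (ℓ : ℕ) {X Y : Ω → EuclideanSpace ℝ (Fin d)}
    (hX : AEStronglyMeasurable X P) (hY : AEStronglyMeasurable Y P) (hX0 : ∫ ω, X ω ∂P = 0)
    (hXb : ∀ᵐ ω ∂P, ‖X ω‖ ≤ 1) (hYb : ∀ᵐ ω ∂P, ‖Y ω‖ ≤ 1)
    (hmom : ∀ k : ℕ, 1 ≤ k → k ≤ ℓ - 1 → ∀ j : Fin k → Fin d,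
      mixedMoment P X j = mixedMoment P Y j)
    {σ : ℝ} (hσ : 1 ≤ σ) :
    ∫ x, (gaussMixture P X σ x - gaussMixture P Y σ x) ^ 2 / gaussMixture P X σ x
      ≤ (12 * ∑' k : ℕ, (2 : ℝ) ^ (ℓ + k) / (Nat.factorial (ℓ + k))) / σ ^ (2 * ℓ)
        * ∫ ω, ‖X ω - Y ω‖ ^ 2 ∂P := by
  have hexp : Real.exp (1 ^ 2 / (2 * σ ^ 2)) ≤ 2 := by
    have hhalf : 1 ^ 2 / (2 * σ ^ 2) ≤ 1 / 2 := by
      rw [one_pow]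
      exact one_div_le_one_div_of_le two_pos (by nlinarith)
    calc _ ≤ Real.exp (1 / 2) := Real.exp_le_exp.2 hhalf
      _ ≤ 1 / (1 - 1 / 2) := Real.exp_bound_div_one_sub_of_interval (by norm_num) (by norm_num)
      _ = 2 := by norm_num
  set K := ∑' k : ℕ, (2 : ℝ) ^ (ℓ + k) / (Nat.factorial (ℓ + k))
  calc _ ≤ Real.exp (1 ^ 2 / (2 * σ ^ 2))
          * ∑' k : ℕ, momentDistSq P P X Y k / (σ ^ (2 * k) * k.factorial) :=
        integral_sq_gaussMixture_sub_div_le (zero_lt_one.trans_le hσ).ne' hX hY hX0 hXb hYb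
    _ ≤ 2 * (6 * K / σ ^ (2 * ℓ) * ∫ ω, ‖X ω - Y ω‖ ^ 2 ∂P) := by
        gcongr
        · exact tsum_nonneg fun k => div_nonneg (momentDistSq_nonneg k) (by positivity)
        · exact tsum_momentDistSq_div_le hX hY hXb hYb hmom hσ
    _ = _ := by ring

end MatchingMoments

/-- If the moments of the mean-zero curves `C, Γ` (bounded by 1, uniformly
`1/3`-close) agree up to order `ℓ − 1`, then for `σ ≥ 1` the χ² divergence between the noisy
curve distributions is at most `K_ℓ σ^{−2ℓ} ρ(C,Γ)` with `K_ℓ = 12 Σ_{k ≥ ℓ} 2^k / k!`. -/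
theorem chi_squared_moment_bound (d ℓ : ℕ) (hℓ : 1 ≤ ℓ)
    (C Γ : ℝ → EuclideanSpace ℝ (Fin d)) (hCc : Continuous C) (hΓc : Continuous Γ)
    (hC0 : (∫ t in (0:ℝ)..1, C t) = 0) (hΓ0 : (∫ t in (0:ℝ)..1, Γ t) = 0)
    (hclose : ∀ t ∈ Set.Icc (0:ℝ) 1, ‖C t - Γ t‖ ≤ 1 / 3)
    (hCb : ∀ t ∈ Set.Icc (0:ℝ) 1, ‖C t‖ < 1)
    (hΓb : ∀ t ∈ Set.Icc (0:ℝ) 1, ‖Γ t‖ < 1)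
    (hmom : ∀ k : ℕ, 1 ≤ k → k ≤ ℓ - 1 → ∀ j : Fin k → Fin d,
      (∫ t in (0:ℝ)..1, ∏ a : Fin k, C t (j a)) = ∫ t in (0:ℝ)..1, ∏ a : Fin k, Γ t (j a))
    (σ : ℝ) (hσ : 1 ≤ σ) :
    (∫ x, (noisyDens C σ x - noisyDens Γ σ x) ^ 2 / noisyDens C σ x)
      ≤ (12 * ∑' k : ℕ, (2:ℝ) ^ (ℓ + k) / (Nat.factorial (ℓ + k))) / σ ^ (2 * ℓ)
          * ∫ t in (0:ℝ)..1, ‖C t - Γ t‖ ^ 2 := by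
  have : IsProbabilityMeasure (volume.restrict (Ioc (0 : ℝ) 1)) := ⟨by simp⟩
  simp only [noisyDens_eq_gaussMixture, intervalIntegral.integral_of_le zero_le_one] at hC0 hmom ⊢
  exact chi_squared_moment_bound_general ℓ hCc.aestronglyMeasurable hΓc.aestronglyMeasurable hC0
    (ae_restrict_of_forall_mem measurableSet_Ioc fun t ht => (hCb t (Ioc_subset_Icc_self ht)).le)
    (ae_restrict_of_forall_mem measurableSet_Ioc fun t ht => (hΓb t (Ioc_subset_Icc_self ht)).le)
    hmom hσ
end
end

section
/- Let M = d ≥ 4. For almost every (Lebesgue) matrix C* ∈ ℝ^{(M+1)×d} whose consecutive rows are distinct, with proportional segment lengths p* ∈ ℝ^M and m₃* = μ₃(C*, p*), there exists a neighborhood of C* in ℝ^{(M+1)×d} such that for every C ≠ C* in that neighborhood, the directional derivative of the map C ↦ L_{m₃*}(C, p*) at C in the direction C* − C is strictly negative: (d/ds) L_{m₃*}(C + s(C* − C), p*) |_{s=0} < 0. -/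
open MeasureTheory Filter Set
noncomputable section

/-- Relaxed third moment `μ₃(C, p)` of a matrix of row-stacked vertices `C` with weights `p`:
`μ₃(C,p)_{jkl} = Σ_i p_i [(1/12)(c_{i−1}+c_i)_j(c_{i−1}+c_i)_k(c_{i−1}+c_i)_l
 + (1/6)(c_{i−1})_j(c_{i−1})_k(c_{i−1})_l + (1/6)(c_i)_j(c_i)_k(c_i)_l]`. -/
def mu3 {M d : ℕ} (C : Fin (M + 1) → EuclideanSpace ℝ (Fin d)) (p : Fin M → ℝ)
    (j k l : Fin d) : ℝ :=
  ∑ i : Fin M, p i *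
    ((1 / 12) * ((C i.castSucc j + C i.succ j) * (C i.castSucc k + C i.succ k)
        * (C i.castSucc l + C i.succ l))
      + (1 / 6) * (C i.castSucc j * C i.castSucc k * C i.castSucc l)
      + (1 / 6) * (C i.succ j * C i.succ k * C i.succ l))

/-- Third moment loss `L_m(C, p) = Σ_{jkl} (μ₃(C,p)_{jkl} − m_{jkl})²`. -/
def Lloss {M d : ℕ} (m : Fin d → Fin d → Fin d → ℝ)
    (C : Fin (M + 1) → EuclideanSpace ℝ (Fin d)) (p : Fin M → ℝ) : ℝ :=
  ∑ j : Fin d, ∑ k : Fin d, ∑ l : Fin d, (mu3 C p j k l - m j k l) ^ 2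

/-- Proportional segment lengths `p_i = ‖c_i − c_{i−1}‖ / Σ_k ‖c_k − c_{k−1}‖` of a matrix of
row-stacked vertices. -/
def propSeg {M d : ℕ} (C : Fin (M + 1) → EuclideanSpace ℝ (Fin d)) (i : Fin M) : ℝ :=
  ‖C i.succ - C i.castSucc‖ / ∑ k : Fin M, ‖C k.succ - C k.castSucc‖

/-!
The loss is the squared Frobenius norm of `F C - F C*` with `F = μ₃(·, p*)`, so the descent property
near `C*` holds as soon as the derivative of `F` at `C*` is injective. That derivative depends
analytically on `C*` on the connected open set of chains with nondegenerate edges, hence it is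
injective almost everywhere once it is injective at one chain.

Take a chain with unit edges along coordinate axes, whose weights `p*` are all equal. A kernel
vector gives a relation `∑ᵢ edgeForm aᵢ aᵢ₊₁ hᵢ hᵢ₊₁ = 0` between complex linear forms. Restricting
it to a hyperplane `a_M = ω a_{M-1}`, with `ω` a root of a suitable quadratic, eliminates `h_M` and
leaves a relation of the same shape on one edge fewer, with an additional weight `τ` at its last
vertex. The two roots `ω` give two hyperplanes, and a linear form vanishing on both is zero. The
disc `‖τ - 2‖ ≤ 2` is stable under `τ ↦ 2 + (1 + ω)²` and avoids the degenerate weights. By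
induction it remains to treat four edges, where the chain is folded from both ends.
-/

section AnalyticAlmostEverywhere

open Topology

variable {Z : Type*} [NormedAddCommGroup Z] [NormedSpace ℝ Z] [FiniteDimensional ℝ Z]

theorem analyticAt_det (A : Z →L[ℝ] Z) : AnalyticAt ℝ (fun B : Z →L[ℝ] Z => B.det) A := by
  let b := Module.finBasis ℝ Z
  have hdet (B : Z →L[ℝ] Z) : B.det = (LinearMap.toMatrix b b B).det :=
    (LinearMap.det_toMatrix b _).symm
  simp only [hdet, Matrix.det_apply', LinearMap.toMatrix_apply]
  refine Finset.analyticAt_fun_sum _ fun σ _ => analyticAt_const.fun_mul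
    (Finset.analyticAt_fun_prod _ fun i _ => ?_)
  exact ((b.coord (σ i)).toContinuousLinearMap ∘L ContinuousLinearMap.apply ℝ Z (b i)).analyticAt A

variable [MeasurableSpace Z] [BorelSpace Z]

theorem ae_ne_zero_of_analyticOnNhd_of_convex (μ : Measure Z) [μ.IsAddHaarMeasure] {s : Set Z}
    (hs : IsOpen s) (hconv : Convex ℝ s) {f : Z → ℝ} (hf : AnalyticOnNhd ℝ f s) {z₀ : Z}
    (hz₀ : z₀ ∈ s) (hfz₀ : f z₀ ≠ 0) : ∀ᵐ z ∂μ, z ∈ s → f z ≠ 0 := by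
  -- Along each line through `z₀` this is the one-variable identity theorem; Fubini then produces
  -- one dilation `v ↦ z₀ + t • v` with `t ≠ 0` that transports the claim to `Z`.
  have hline (v : Z) : ∀ᵐ t : ℝ, z₀ + t • v ∈ s → f (z₀ + t • v) ≠ 0 := by
    set T : Set ℝ := (fun t : ℝ => z₀ + t • v) ⁻¹' s
    have hTopen : IsOpen T := hs.preimage (by fun_prop)
    have hTconn : IsConnected T := by
      refine ⟨⟨0, by simpa [T] using hz₀⟩, Convex.isPreconnected ?_⟩
      exact (hconv.translate_preimage_right z₀).linear_preimage (LinearMap.toSpanSingleton ℝ Z v)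
    have han : AnalyticOnNhd ℝ (fun t : ℝ => f (z₀ + t • v)) T := fun t ht =>
      (hf _ ht).fun_comp (f := fun t : ℝ => z₀ + t • v) (by fun_prop)
    have hcod := han.preimage_zero_mem_codiscreteWithin (x := 0) (by simpa using hfz₀)
      (by simpa [T] using hz₀) hTconn
    exact (ae_restrict_iff' hTopen.measurableSet).1
      (ae_restrict_le_codiscreteWithin hTopen.measurableSet hcod)
  have hmeas : MeasurableSet {q : Z × ℝ | z₀ + q.2 • q.1 ∈ s → f (z₀ + q.2 • q.1) ≠ 0} := by
    have hopen : IsOpen (s ∩ f ⁻¹' {0}ᶜ) :=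
      hf.continuousOn.isOpen_inter_preimage hs isOpen_compl_singleton
    have hgood : MeasurableSet {z | z ∈ s → f z ≠ 0} := by
      rw [show {z | z ∈ s → f z ≠ 0} = sᶜ ∪ s ∩ f ⁻¹' {0}ᶜ by
        ext z
        by_cases hz : z ∈ s <;> simp [hz]]
      exact hs.measurableSet.compl.union hopen.measurableSet
    exact (show Measurable fun q : Z × ℝ => z₀ + q.2 • q.1 by fun_prop) hgood
  have hswap : ∀ᵐ t : ℝ, ∀ᵐ v ∂μ, z₀ + t • v ∈ s → f (z₀ + t • v) ≠ 0 :=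
    (Measure.ae_ae_comm hmeas).1 (ae_of_all _ hline)
  obtain ⟨t, ht, ht0⟩ := (hswap.and (ae_iff.2 (by simp) : ∀ᵐ t : ℝ, t ≠ 0)).exists
  have hq : Measure.QuasiMeasurePreserving (fun z => t⁻¹ • (z - z₀)) μ μ :=
    (Measure.quasiMeasurePreserving_smul μ (inv_ne_zero ht0)).comp
      (measurePreserving_sub_right μ z₀).quasiMeasurePreserving
  filter_upwards [hq.ae ht] with z hz
  simpa [smul_inv_smul₀ ht0] using hz

theorem ae_ne_zero_of_analyticOnNhd (μ : Measure Z) [μ.IsAddHaarMeasure] {U : Set Z}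
    (hU : IsOpen U) (hUc : IsPreconnected U) {f : Z → ℝ} (hf : AnalyticOnNhd ℝ f U) {z₀ : Z}
    (hz₀ : z₀ ∈ U) (hfz₀ : f z₀ ≠ 0) : ∀ᵐ z ∂μ, z ∈ U → f z ≠ 0 := by
  suffices μ {z | z ∈ U ∧ f z = 0} = 0 by
    rw [ae_iff]
    simpa using this
  refine measure_null_of_locally_null _ fun z hz => ?_
  obtain ⟨r, hr, hball⟩ := Metric.isOpen_iff.1 hU z hz.1
  have hfreq : ∃ w ∈ Metric.ball z r, f w ≠ 0 := by
    by_contra! hzero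
    exact hfz₀ (hf.eqOn_zero_of_preconnected_of_eventuallyEq_zero hUc hz.1
      (Filter.mem_of_superset (Metric.ball_mem_nhds z hr) hzero) hz₀)
  obtain ⟨w, hw, hfw⟩ := hfreq
  have hae := ae_ne_zero_of_analyticOnNhd_of_convex μ Metric.isOpen_ball (convex_ball z r)
    (hf.mono hball) hw hfw
  refine ⟨_, inter_mem_nhdsWithin _ (Metric.ball_mem_nhds z hr),
    measure_mono_null ?_ (ae_iff.1 hae)⟩
  rintro y ⟨⟨-, hy⟩, hyr⟩
  exact fun h => h hyr hy

theorem ae_injective_of_analyticOnNhd {W T : Type*} [NormedAddCommGroup W] [NormedSpace ℝ W]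
    [FiniteDimensional ℝ W] [NormedAddCommGroup T] [NormedSpace ℝ T] [FiniteDimensional ℝ T]
    (μ : Measure Z) [μ.IsAddHaarMeasure]
    {U : Set Z} (hU : IsOpen U) (hUc : IsPreconnected U) {A : Z → W →L[ℝ] T}
    (hA : AnalyticOnNhd ℝ A U) {z₀ : Z} (hz₀ : z₀ ∈ U) (hinj : Function.Injective (A z₀)) :
    ∀ᵐ z ∂μ, z ∈ U → Function.Injective (A z) := by
  obtain ⟨R, hR⟩ := ContinuousLinearMap.HasLeftInverse.of_injective_of_finiteDimensional hinj
  have hana : AnalyticOnNhd ℝ (fun z => (R ∘L A z).det) U := fun z hz =>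
    (analyticAt_det _).comp
      (((ContinuousLinearMap.compL ℝ W T W R).analyticAt _).comp (hA z hz))
  have hdet : (R ∘L A z₀).det ≠ 0 := by
    rw [show R ∘L A z₀ = ContinuousLinearMap.id ℝ W from ContinuousLinearMap.ext hR]
    simp [ContinuousLinearMap.det]
  filter_upwards [ae_ne_zero_of_analyticOnNhd μ hU hUc hana hz₀ hdet] with z hz hzU
  exact Function.Injective.of_comp
    (LinearMap.equivOfDetNeZero (R ∘L A z : W →ₗ[ℝ] W) (hz hzU)).injective

end AnalyticAlmostEverywhere

section Descent

open Asymptotics Topology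

theorem inner_pos_of_norm_sub_le {T : Type*} [NormedAddCommGroup T] [InnerProductSpace ℝ T]
    {a u v : T} (ha : a ≠ 0) (hu : ‖u - a‖ ≤ ‖a‖ / 4) (hv : ‖v - a‖ ≤ ‖a‖ / 4) :
    0 < inner ℝ u v := by
  have hpos : 0 < ‖a‖ := norm_pos_iff.2 ha
  have hexpand : inner ℝ u v = ‖a‖ ^ 2 + inner ℝ a (v - a) + inner ℝ (u - a) a
      + inner ℝ (u - a) (v - a) := by
    simp only [inner_sub_left, inner_sub_right, real_inner_self_eq_norm_sq]
    ring
  have h₁ := (abs_le.1 (abs_real_inner_le_norm a (v - a))).1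
  have h₂ := (abs_le.1 (abs_real_inner_le_norm (u - a) a)).1
  have h₃ := (abs_le.1 (abs_real_inner_le_norm (u - a) (v - a))).1
  have h₃' : ‖u - a‖ * ‖v - a‖ ≤ ‖a‖ / 4 * (‖a‖ / 4) := by gcongr
  nlinarith

theorem eventually_inner_fderiv_pos {W T : Type*} [NormedAddCommGroup W] [NormedSpace ℝ W]
    [FiniteDimensional ℝ W] [NormedAddCommGroup T] [InnerProductSpace ℝ T] {F : W → T} {x₀ : W}
    (hF : ContDiffAt ℝ 1 F x₀) (hinj : Function.Injective (fderiv ℝ F x₀)) :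
    ∀ᶠ x in 𝓝 x₀, x ≠ x₀ → 0 < inner ℝ (F x - F x₀) (fderiv ℝ F x (x - x₀)) := by
  have hO : (fun x => x - x₀) =O[𝓝 x₀] fun x => fderiv ℝ F x₀ (x - x₀) := by
    obtain ⟨K, -, hK⟩ := (fderiv ℝ F x₀).toLinearMap.exists_antilipschitzWith
      (LinearMap.ker_eq_bot.2 hinj)
    have hbound (w : W) : ‖w‖ ≤ K * ‖fderiv ℝ F x₀ w‖ := by simpa using hK.le_mul_norm_sub w 0
    exact IsBigO.of_bound K (.of_forall fun x => hbound (x - x₀))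
  have hvalue : (fun x => F x - F x₀ - fderiv ℝ F x₀ (x - x₀))
      =o[𝓝 x₀] fun x => fderiv ℝ F x₀ (x - x₀) :=
    (hF.differentiableAt one_ne_zero).hasFDerivAt.isLittleO.trans_isBigO hO
  have hderiv : (fun x => fderiv ℝ F x (x - x₀) - fderiv ℝ F x₀ (x - x₀))
      =o[𝓝 x₀] fun x => fderiv ℝ F x₀ (x - x₀) := by
    have hcont : (fun x => fderiv ℝ F x - fderiv ℝ F x₀) =o[𝓝 x₀] fun _ => (1 : ℝ) :=
      (isLittleO_one_iff ℝ).2 <|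
        tendsto_sub_nhds_zero_iff.2 (hF.fderiv_right (m := 0) le_rfl).continuousAt
    have happly : (fun x => (fderiv ℝ F x - fderiv ℝ F x₀) (x - x₀))
        =O[𝓝 x₀] fun x => ‖fderiv ℝ F x - fderiv ℝ F x₀‖ * ‖x - x₀‖ :=
      IsBigO.of_norm_le fun x => (fderiv ℝ F x - fderiv ℝ F x₀).le_opNorm _
    have hlittle := happly.trans_isLittleO
      (hcont.norm_left.mul_isBigO (isBigO_refl (fun x => ‖x - x₀‖) _))
    simpa using hlittle.trans_isBigO (by simpa using hO)
  filter_upwards [hvalue.def (by norm_num : (0 : ℝ) < 1 / 4),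
    hderiv.def (by norm_num : (0 : ℝ) < 1 / 4)] with x hx hx' hne
  refine inner_pos_of_norm_sub_le (a := fderiv ℝ F x₀ (x - x₀)) ?_ (by linarith) (by linarith)
  simpa using hinj.ne (sub_ne_zero.2 hne)

end Descent

section Functionals

variable {K V : Type*} [Field K] [AddCommGroup V] [Module K V]

theorem dual_eq_zero_of_quadraticForm_mul_eq_zero {q : QuadraticForm K V} {f : Module.Dual K V}
    (h2 : (2 : K) ≠ 0) (hqf : ∀ v, q v * f v = 0) {u : V} (hu : q u ≠ 0) : f = 0 := by
  have hfu : f u = 0 := (mul_eq_zero.1 (hqf u)).resolve_left hu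
  ext v
  by_contra hfv
  have hq (t : K) : q (v + t • u) = 0 :=
    (mul_eq_zero.1 (hqf (v + t • u))).resolve_right (by simpa [hfu] using hfv)
  have parallelogram : q (v + u) + q (v - u) = 2 * q v + 2 * q u := by
    rw [sub_eq_add_neg, QuadraticMap.map_add q, QuadraticMap.map_add q, QuadraticMap.map_neg,
      QuadraticMap.polar_neg_right]
    ring
  have h0 : q v = 0 := by simpa using hq 0
  have hadd : q (v + u) = 0 := by simpa using hq 1
  have hsub : q (v - u) = 0 := by simpa [sub_eq_add_neg] using hq (-1)
  rw [h0, hadd, hsub] at parallelogram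
  exact hu (by simpa [h2] using parallelogram)

theorem dual_eq_zero_of_mul_sq_add_mul_sq {f g y z : Module.Dual K V} (h2 : (2 : K) ≠ 0)
    (h : ∀ v, f v * y v ^ 2 + g v * z v ^ 2 = 0)
    (hyz : ∀ b c : K, ∃ v, y v = b ∧ z v = c) : f = 0 ∧ g = 0 := by
  obtain ⟨e, hye, hze⟩ := hyz 1 0
  obtain ⟨e', hye', hze'⟩ := hyz 0 1
  have hfe : f e = 0 := by simpa [hye, hze] using h e
  have hge' : g e' = 0 := by simpa [hye', hze'] using h e'
  have hadd : f e' + g e = 0 := by simpa [hye, hze, hye', hze', hfe, hge'] using h (e + e')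
  have hsub : -f e' + g e = 0 := by simpa [hye, hze, hye', hze', hfe, hge'] using h (e - e')
  have hge : g e = 0 := by
    have : 2 * g e = 0 := by linear_combination hadd + hsub
    simpa [h2] using this
  have hfe' : f e' = 0 := by linear_combination hadd - hge
  refine ⟨?_, ?_⟩ <;> ext v
  · simpa [hye, hze, hye', hze', hfe, hge, hfe', hge'] using
      h (v + (1 - y v) • e - z v • e')
  · simpa [hye, hze, hye', hze', hfe, hge, hfe', hge'] using
      h (v - y v • e + (1 - z v) • e')

theorem dual_eq_zero_of_two_hyperplanes {S : Submodule K V} {f p q : Module.Dual K V} {r s : K}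
    (hrs : r ≠ s) (hpq : ∃ u ∈ S, p u = r ∧ q u = 1)
    (hr : ∀ v ∈ S, p v = r * q v → f v = 0) (hs : ∀ v ∈ S, p v = s * q v → f v = 0) :
    ∀ v ∈ S, f v = 0 := by
  intro v hv
  obtain ⟨u, hu, hpu, hqu⟩ := hpq
  have hfu : f u = 0 := hr u hu (by rw [hpu, hqu, mul_one])
  have hrs' : r - s ≠ 0 := sub_ne_zero.2 hrs
  have hfvu := hs (v - ((p v - s * q v) / (r - s)) • u) (S.sub_mem hv (S.smul_mem _ hu)) (by
    simp only [map_sub, map_smul, smul_eq_mul, hpu, hqu]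
    field_simp
    ring)
  simpa [hfu] using hfvu

end Functionals

section FoldRatios

/-- `ω` is a fold ratio for the tip weight `τ`: on the hyperplane where the last vertex is `ω` times
the one before it, the contribution of the last vertex to a syzygy disappears (`edgeForm_fold`). -/
def IsFoldRatio (τ ω : ℂ) : Prop := (3 + τ) * ω ^ 2 + 2 * ω + 1 = 0

theorem ofReal_add_ne_zero_of_norm_sub_two_le {τ : ℂ} (hτ : ‖τ - 2‖ ≤ 2) {c : ℝ} (hc : 0 < c) :
    (c : ℂ) + τ ≠ 0 := by
  intro h
  have : ‖τ - 2‖ = c + 2 := by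
    rw [show τ - 2 = -((c + 2 : ℝ) : ℂ) by push_cast; linear_combination h, norm_neg,
      Complex.norm_of_nonneg (by positivity)]
  linarith

theorem exists_isFoldRatio_pair {τ : ℂ} (hτ : ‖τ - 2‖ ≤ 2) :
    ∃ ω₁ ω₂, IsFoldRatio τ ω₁ ∧ IsFoldRatio τ ω₂ ∧ (1 + ω₁) ^ 2 ≠ (1 + ω₂) ^ 2 := by
  have h2 : 2 + τ ≠ 0 := by simpa using ofReal_add_ne_zero_of_norm_sub_two_le hτ two_pos
  have h3 : 3 + τ ≠ 0 := by simpa using ofReal_add_ne_zero_of_norm_sub_two_le hτ three_pos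
  obtain ⟨δ, hδ⟩ := IsAlgClosed.exists_pow_nat_eq (-(2 + τ)) two_pos
  have hδ0 : δ ≠ 0 := by
    rintro rfl
    exact h2 (by linear_combination hδ)
  refine ⟨(-1 + δ) / (3 + τ), (-1 - δ) / (3 + τ), ?_, ?_, fun h => ?_⟩
  · unfold IsFoldRatio; field_simp; linear_combination hδ
  · unfold IsFoldRatio; field_simp; linear_combination hδ
  · field_simp at h
    have : (2 + τ) * δ = 0 := by linear_combination h / 4
    simp_all

theorem norm_one_add_sq_le {τ ω : ℂ} (hτ : ‖τ - 2‖ ≤ 2) (h : IsFoldRatio τ ω) :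
    ‖(1 + ω) ^ 2‖ ≤ 2 := by
  have hfactor : (1 + ω + 2 * Complex.I * ω) * (1 + ω - 2 * Complex.I * ω) = (2 - τ) * ω ^ 2 := by
    unfold IsFoldRatio at h
    linear_combination h - 4 * ω ^ 2 * Complex.I_sq
  have hprod : ‖1 + ω + 2 * Complex.I * ω‖ ^ 2 * ‖1 + ω - 2 * Complex.I * ω‖ ^ 2
      ≤ (2 * ‖ω‖ ^ 2) ^ 2 := by
    rw [← mul_pow, ← norm_mul, hfactor, norm_mul, norm_pow, norm_sub_rev 2 τ]
    gcongr
  obtain ⟨x, y⟩ := ω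
  -- Both factors exceed `√2 * ‖ω‖` in norm as soon as `‖1 + ω‖ ^ 2 > 2`.
  have large (b : ℝ) (hb : 2 < (1 + x) ^ 2 + b ^ 2) :
      2 * (x ^ 2 + b ^ 2) < (1 + x - 2 * b) ^ 2 + (b + 2 * x) ^ 2 := by
    nlinarith [sq_nonneg (1 + x + b)]
  simp only [norm_pow, Complex.sq_norm, Complex.normSq_apply, ← sq] at hprod ⊢
  simp only [Complex.add_re, Complex.one_re, Complex.mul_re, Complex.re_ofNat, Complex.I_re,
    mul_zero, Complex.im_ofNat, Complex.I_im, mul_one, sub_self, zero_mul, Complex.mul_im,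
    add_zero, zero_sub, Complex.add_im, Complex.one_im, zero_add, Complex.sub_re,
    sub_neg_eq_add, Complex.sub_im] at hprod ⊢
  by_contra! hlt
  nlinarith [large y hlt, large (-y) (by simpa using hlt)]

end FoldRatios

section Chains

open Module

universe u

/-- Four times the derivative, in the direction `(u, v)`, of the cubic form
`(a + b) ^ 3 / 12 + a ^ 3 / 6 + b ^ 3 / 6` that a single edge contributes to the third moment. -/
def edgeForm (a b u v : ℂ) : ℂ :=
  (3 * a ^ 2 + 2 * a * b + b ^ 2) * u + (a ^ 2 + 2 * a * b + 3 * b ^ 2) * v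

variable {V : Type u} [AddCommGroup V] [Module ℂ V]

/-- The vertices `a 0, …, a n` of a chain, regarded as linear functionals on `V`, have vertex `2` at
the origin and are otherwise independent: their values can be prescribed freely. -/
structure IsBasedChain (n : ℕ) (a : ℕ → Dual ℂ V) : Prop where
  base : a 2 = 0
  exists_eq : ∀ b : ℕ → ℂ, b 2 = 0 → ∃ v, ∀ j ≤ n, a j v = b j

/-- The first variation of the third moment of the chain `a` in the direction `h` vanishes, as a
cubic form on `V`. The edges have equal weight; the extra term of weight `τ` at the last vertex is
what remains of a longer chain whose far end has been folded onto this one. -/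
def IsSyzygy (n : ℕ) (τ : ℂ) (a h : ℕ → Dual ℂ V) : Prop :=
  ∀ v, ∑ i ∈ Finset.range n, edgeForm (a i v) (a (i + 1) v) (h i v) (h (i + 1) v)
    + τ * a n v ^ 2 * h n v = 0

/-- With tip weight `τ`, a based chain with `n` edges has no nonzero infinitesimal deformation
preserving its third moment. -/
def Rigid (n : ℕ) (τ : ℂ) : Prop :=
  ∀ (V : Type u) [AddCommGroup V] [Module ℂ V] (a h : ℕ → Dual ℂ V),
    IsBasedChain n a → IsSyzygy n τ a h → ∀ j ≤ n, h j = 0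

theorem IsBasedChain.exists_pair {n i j : ℕ} {a : ℕ → Dual ℂ V} (ha : IsBasedChain n a)
    (hi : i ≤ n) (hj : j ≤ n) (hi2 : i ≠ 2) (hj2 : j ≠ 2) (hij : i ≠ j) (x y : ℂ) :
    ∃ v, a i v = x ∧ a j v = y := by
  obtain ⟨v, hv⟩ := ha.exists_eq (Pi.single i x + Pi.single j y) (by simp [hi2.symm, hj2.symm])
  exact ⟨v, by simp [hv i hi, hij], by simp [hv j hj, hij.symm]⟩

theorem IsBasedChain.exists_four {a : ℕ → Dual ℂ V} (ha : IsBasedChain 4 a) (x y z w : ℂ) :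
    ∃ v, a 0 v = x ∧ a 1 v = y ∧ a 3 v = z ∧ a 4 v = w := by
  obtain ⟨v, hv⟩ := ha.exists_eq
    (Pi.single 0 x + Pi.single 1 y + Pi.single 3 z + Pi.single 4 w) (by simp)
  exact ⟨v, by simp [hv], by simp [hv], by simp [hv], by simp [hv]⟩

theorem IsBasedChain.domRestrict_ker {n : ℕ} {a : ℕ → Dual ℂ V} (ha : IsBasedChain (n + 1) a)
    (hn : 1 < n) (ω : ℂ) :
    IsBasedChain n fun j => (a j).domRestrict (LinearMap.ker (a (n + 1) - ω • a n)) where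
  base := by simp only [ha.base]; rfl
  exists_eq b hb := by
    obtain ⟨v, hv⟩ := ha.exists_eq (Function.update b (n + 1) (ω * b n))
      (by rwa [Function.update_of_ne (by omega)])
    refine ⟨⟨v, ?_⟩, fun j hj => ?_⟩
    · simp [hv (n + 1) le_rfl, hv n n.le_succ]
    · simp [hv j (by omega), Function.update_of_ne (show j ≠ n + 1 by omega)]

theorem edgeForm_fold {τ ω : ℂ} (hω : IsFoldRatio τ ω) (b u v : ℂ) :
    edgeForm b (ω * b) u v + τ * (ω * b) ^ 2 * v = (2 + (1 + ω) ^ 2) * b ^ 2 * u := by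
  unfold edgeForm IsFoldRatio at *
  linear_combination b ^ 2 * v * hω

theorem edgeForm_symm (a b u v : ℂ) : edgeForm a b u v = edgeForm b a v u := by
  unfold edgeForm
  ring

theorem dual_eq_zero_of_edgeForm_add {τ : ℂ} {a b f : Dual ℂ V}
    (h : ∀ v, edgeForm (a v) (b v) 0 (f v) + τ * b v ^ 2 * f v = 0)
    (hab : ∃ v, a v = 1 ∧ b v = 0) : f = 0 := by
  obtain ⟨v, hav, hbv⟩ := hab
  refine dual_eq_zero_of_quadraticForm_mul_eq_zero (u := v) two_ne_zero
    (q := QuadraticMap.linMulLin a a + (2 : ℂ) • QuadraticMap.linMulLin a b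
      + (3 + τ) • QuadraticMap.linMulLin b b) (fun w => ?_) ?_
  · rw [← h w, edgeForm]
    simp only [add_apply, smul_apply, QuadraticMap.linMulLin_apply, smul_eq_mul]
    ring
  · simp [hav, hbv]

theorem IsSyzygy.domRestrict_ker {n : ℕ} {τ ω : ℂ} {a h : ℕ → Dual ℂ V}
    (hah : IsSyzygy (n + 1) τ a h) (hω : IsFoldRatio τ ω) :
    IsSyzygy n (2 + (1 + ω) ^ 2)
      (fun j => (a j).domRestrict (LinearMap.ker (a (n + 1) - ω • a n)))
      (fun j => (h j).domRestrict (LinearMap.ker (a (n + 1) - ω • a n))) := by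
  rintro ⟨v, hv⟩
  have hv' : a (n + 1) v = ω * a n v := by simpa [sub_eq_zero] using hv
  simp only [LinearMap.domRestrict_apply]
  rw [← hah v, Finset.sum_range_succ, add_assoc, hv', edgeForm_fold hω]

theorem dual_eq_zero_of_isFoldRatio {τ : ℂ} {S : Submodule ℂ V} {f p q : Dual ℂ V}
    (hτ : ‖τ - 2‖ ≤ 2) (hpq : ∀ r, ∃ u ∈ S, p u = r ∧ q u = 1)
    (hf : ∀ ω, IsFoldRatio τ ω → ∀ v ∈ S, p v = ω * q v → f v = 0) : ∀ v ∈ S, f v = 0 := by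
  obtain ⟨ω₁, ω₂, hω₁, hω₂, hne⟩ := exists_isFoldRatio_pair hτ
  exact dual_eq_zero_of_two_hyperplanes (ne_of_apply_ne (fun ω => (1 + ω) ^ 2) hne) (hpq ω₁)
    (hf ω₁ hω₁) (hf ω₂ hω₂)

theorem IsSyzygy.last_eq_zero {n : ℕ} {τ : ℂ} {a h : ℕ → Dual ℂ V} (hah : IsSyzygy (n + 1) τ a h)
    (ha : ∃ v, a n v = 1 ∧ a (n + 1) v = 0) (hinner : ∀ j ≤ n, h j = 0) : h (n + 1) = 0 := by
  refine dual_eq_zero_of_edgeForm_add (τ := τ) (fun v => ?_) ha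
  refine Eq.trans ?_ (hah v)
  rw [Finset.sum_range_succ, Finset.sum_eq_zero, hinner n le_rfl]
  · simp
  · intro i hi
    rw [Finset.mem_range] at hi
    simp [hinner i hi.le, hinner (i + 1) hi, edgeForm]

theorem IsSyzygy.first_eq_zero {n : ℕ} {τ : ℂ} {a h : ℕ → Dual ℂ V}
    (hah : IsSyzygy (n + 1) τ a h) (ha : ∃ v, a 1 v = 1 ∧ a 0 v = 0)
    (hrest : ∀ j ≠ 0, j ≤ n + 1 → h j = 0) : h 0 = 0 := by
  refine dual_eq_zero_of_edgeForm_add (τ := 0) (fun v => ?_) ha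
  refine Eq.trans ?_ (hah v)
  rw [Finset.sum_range_succ', Finset.sum_eq_zero, hrest 1 one_ne_zero (by omega),
    hrest (n + 1) n.succ_ne_zero le_rfl, edgeForm_symm]
  · simp
  · intro i hi
    rw [Finset.mem_range] at hi
    simp [hrest (i + 1) (by omega) (by omega), hrest (i + 1 + 1) (by omega) (by omega), edgeForm]

theorem Rigid.succ {n : ℕ} {τ : ℂ} (hn : 2 < n) (hτ : ‖τ - 2‖ ≤ 2)
    (ih : ∀ σ : ℂ, ‖σ - 2‖ ≤ 2 → Rigid.{u} n σ) : Rigid.{u} (n + 1) τ := by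
  intro V _ _ a h ha hah
  have hpair := ha.exists_pair (i := n + 1) (j := n) le_rfl n.le_succ (by omega) (by omega)
    n.succ_ne_self
  have hinner (j : ℕ) (hj : j ≤ n) : h j = 0 := by
    ext v
    refine dual_eq_zero_of_isFoldRatio (S := ⊤) hτ (fun r => by simpa using hpair r 1)
      (fun ω hω v _ hv => ?_) v trivial
    have hσ : ‖2 + (1 + ω) ^ 2 - 2‖ ≤ 2 := by simpa using norm_one_add_sq_le hτ hω
    exact LinearMap.congr_fun (ih _ hσ _ _ _ (ha.domRestrict_ker (by omega) ω)
      (hah.domRestrict_ker hω) j hj) ⟨v, by simp [hv]⟩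
  intro j hj
  rcases hj.lt_or_eq with hj | rfl
  · exact hinner j (by omega)
  · exact hah.last_eq_zero (by simpa [and_comm] using hpair 0 1) hinner

theorem IsSyzygy.relations_of_three {σ ω : ℂ} {a h : ℕ → Dual ℂ V}
    (ha : IsBasedChain 3 a) (hah : IsSyzygy 3 σ a h) (hω : IsFoldRatio 0 ω) {v : V}
    (hv : a 0 v = ω * a 1 v) :
    (5 + (1 + ω) ^ 2) * h 1 v + h 2 v = 0 ∧ h 2 v + (3 + σ) * h 3 v = 0 := by
  let S := LinearMap.ker (a 0 - ω • a 1)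
  have hfold : ((5 + (1 + ω) ^ 2) • h 1 + h 2).domRestrict S = 0 ∧
      (h 2 + (3 + σ) • h 3).domRestrict S = 0 := by
    refine dual_eq_zero_of_mul_sq_add_mul_sq (y := (a 1).domRestrict S)
      (z := (a 3).domRestrict S) two_ne_zero (fun ⟨w, hw⟩ => ?_) (fun y z => ?_)
    · have hw' : a 0 w = ω * a 1 w := by simpa [S, sub_eq_zero] using hw
      have hfront : edgeForm (a 0 w) (a 1 w) (h 0 w) (h 1 w)
          = (2 + (1 + ω) ^ 2) * a 1 w ^ 2 * h 1 w := by
        rw [edgeForm_symm, hw', ← edgeForm_fold hω]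
        ring
      have hsum := hah w
      simp only [Finset.sum_range_succ, Finset.sum_range_zero, zero_add, Nat.reduceAdd, hfront,
        ha.base, LinearMap.zero_apply] at hsum
      simp only [LinearMap.domRestrict_apply, LinearMap.add_apply, LinearMap.smul_apply,
        smul_eq_mul]
      unfold edgeForm at hsum
      linear_combination hsum
    · obtain ⟨u, hu⟩ := ha.exists_eq (Pi.single 0 (ω * y) + Pi.single 1 y + Pi.single 3 z)
        (by simp)
      exact ⟨⟨u, by simp [S, hu]⟩, by simp [hu], by simp [hu]⟩
  have hvS : v ∈ S := by simp [S, hv]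
  exact ⟨LinearMap.congr_fun hfold.1 ⟨v, hvS⟩, LinearMap.congr_fun hfold.2 ⟨v, hvS⟩⟩

theorem IsSyzygy.relations_of_four {τ ω ω' : ℂ} {a h : ℕ → Dual ℂ V}
    (ha : IsBasedChain 4 a) (hah : IsSyzygy 4 τ a h) (hω' : IsFoldRatio 0 ω')
    (hω : IsFoldRatio τ ω) {v : V}
    (hfront : a 0 v = ω' * a 1 v) (hback : a 4 v = ω * a 3 v) :
    (5 + (1 + ω') ^ 2) * h 1 v + h 2 v = 0 ∧ h 2 v + (5 + (1 + ω) ^ 2) * h 3 v = 0 := by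
  have hv : v ∈ LinearMap.ker (a (3 + 1) - ω • a 3) := by simp [hback]
  obtain ⟨hfront, hback⟩ := (hah.domRestrict_ker hω).relations_of_three
    (ha.domRestrict_ker (by norm_num) ω) hω' (v := ⟨v, hv⟩) hfront
  simp only [LinearMap.domRestrict_apply] at hfront hback
  exact ⟨hfront, by linear_combination hback⟩

theorem eq_zero_of_mul_add_pair {K : Type*} [Field K] {r s x y : K} (hrs : r ≠ s)
    (hr : r * x + y = 0) (hs : s * x + y = 0) : x = 0 ∧ y = 0 := by
  have hx : x = 0 := (mul_eq_zero.1 (by linear_combination hr - hs : (r - s) * x = 0)).resolve_left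
    (sub_ne_zero.2 hrs)
  exact ⟨hx, by simpa [hx] using hr⟩

theorem IsSyzygy.front_relation {τ ω : ℂ} {a h : ℕ → Dual ℂ V} (ha : IsBasedChain 4 a)
    (hah : IsSyzygy 4 τ a h) (hτ : ‖τ - 2‖ ≤ 2) (hω : IsFoldRatio 0 ω) {v : V}
    (hv : a 0 v = ω * a 1 v) : (5 + (1 + ω) ^ 2) * h 1 v + h 2 v = 0 := by
  refine dual_eq_zero_of_isFoldRatio (f := (5 + (1 + ω) ^ 2) • h 1 + h 2)
    (S := LinearMap.ker (a 0 - ω • a 1)) (p := a 4) (q := a 3) hτ (fun r => ?_)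
    (fun ω' hω' w hw hback => ?_) v (by simp [hv])
  · obtain ⟨u, hu0, hu1, hu3, hu4⟩ := ha.exists_four 0 0 1 r
    exact ⟨u, by simp [hu0, hu1], hu4, hu3⟩
  · exact (hah.relations_of_four ha hω hω' (by simpa [sub_eq_zero] using hw) hback).1

theorem IsSyzygy.back_relation {τ ω : ℂ} {a h : ℕ → Dual ℂ V} (ha : IsBasedChain 4 a)
    (hah : IsSyzygy 4 τ a h) (hω : IsFoldRatio τ ω) {v : V}
    (hv : a 4 v = ω * a 3 v) : (5 + (1 + ω) ^ 2) * h 3 v + h 2 v = 0 := by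
  rw [add_comm]
  refine dual_eq_zero_of_isFoldRatio (f := h 2 + (5 + (1 + ω) ^ 2) • h 3) (τ := 0)
    (S := LinearMap.ker (a 4 - ω • a 3)) (p := a 0) (q := a 1) (by simp) (fun r => ?_)
    (fun ω' hω' w hw hfront => ?_) v (by simp [hv])
  · obtain ⟨u, hu0, hu1, hu3, hu4⟩ := ha.exists_four r 1 0 0
    exact ⟨u, by simp [hu3, hu4], hu0, hu1⟩
  · exact (hah.relations_of_four ha hω' hω hfront (by simpa [sub_eq_zero] using hw)).2

theorem IsSyzygy.base_eq_zero {τ : ℂ} {a h : ℕ → Dual ℂ V} (ha : IsBasedChain 4 a)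
    (hah : IsSyzygy 4 τ a h) (hτ : ‖τ - 2‖ ≤ 2) : h 2 = 0 := by
  have front_zero (v : V) (h0 : a 0 v = 0) (h1 : a 1 v = 0) : h 2 v = 0 := by
    obtain ⟨ω₁, ω₂, hω₁, hω₂, hne⟩ := exists_isFoldRatio_pair (τ := 0) (by simp)
    exact (eq_zero_of_mul_add_pair ((add_right_injective 5).ne hne)
      (hah.front_relation ha hτ hω₁ (by simp [h0, h1]))
      (hah.front_relation ha hτ hω₂ (by simp [h0, h1]))).2
  have back_zero (v : V) (h3 : a 3 v = 0) (h4 : a 4 v = 0) : h 2 v = 0 := by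
    obtain ⟨ω₁, ω₂, hω₁, hω₂, hne⟩ := exists_isFoldRatio_pair hτ
    exact (eq_zero_of_mul_add_pair ((add_right_injective 5).ne hne)
      (hah.back_relation ha hω₁ (by simp [h3, h4])) (hah.back_relation ha hω₂ (by simp [h3, h4]))).2
  ext v
  obtain ⟨u, hu0, hu1, hu3, hu4⟩ := ha.exists_four (a 0 v) (a 1 v) 0 0
  have hvu := front_zero (v - u) (by simp [hu0]) (by simp [hu1])
  simpa [back_zero u hu3 hu4] using hvu

theorem five_add_one_add_sq_ne_zero {τ ω : ℂ} (hτ : ‖τ - 2‖ ≤ 2) (hω : IsFoldRatio τ ω) :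
    5 + (1 + ω) ^ 2 ≠ 0 := by
  convert ofReal_add_ne_zero_of_norm_sub_two_le (τ := 2 + (1 + ω) ^ 2)
    (by simpa using norm_one_add_sq_le hτ hω) three_pos using 1
  push_cast
  ring

theorem rigid_four {τ : ℂ} (hτ : ‖τ - 2‖ ≤ 2) : Rigid.{u} 4 τ := by
  intro V _ _ a h ha hah
  have h0 : ‖(0 : ℂ) - 2‖ ≤ 2 := by simp
  have hfront (r : ℂ) : ∃ u ∈ (⊤ : Submodule ℂ V), a 0 u = r ∧ a 1 u = 1 := by
    simpa using ha.exists_pair (i := 0) (j := 1) (by simp) (by simp) (by simp) (by simp) (by simp)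
      r 1
  have hback (r : ℂ) : ∃ u ∈ (⊤ : Submodule ℂ V), a 4 u = r ∧ a 3 u = 1 := by
    simpa using ha.exists_pair (i := 4) (j := 3) (by simp) (by simp) (by simp) (by simp) (by simp)
      r 1
  have hbase : h 2 = 0 := hah.base_eq_zero ha hτ
  have hone : h 1 = 0 := by
    ext v
    refine dual_eq_zero_of_isFoldRatio h0 hfront (fun ω hω w _ hw => ?_) v trivial
    simpa [hbase, five_add_one_add_sq_ne_zero h0 hω] using hah.front_relation ha hτ hω hw
  have hthree : h 3 = 0 := by
    ext v
    refine dual_eq_zero_of_isFoldRatio hτ hback (fun ω hω w _ hw => ?_) v trivial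
    simpa [hbase, five_add_one_add_sq_ne_zero hτ hω] using hah.back_relation ha hω hw
  have hzero : h 0 = 0 := by
    ext v
    refine dual_eq_zero_of_isFoldRatio hτ hback (fun ω hω w _ hw => ?_) v trivial
    refine LinearMap.congr_fun ((hah.domRestrict_ker hω).first_eq_zero ?_ ?_) ⟨w, by simp [hw]⟩
    · exact (ha.domRestrict_ker (by norm_num) ω).exists_pair (by simp) (by simp) (by simp) (by simp)
        (by simp) 1 0
    · intro j hj0 hj
      have hj_eq : h j = 0 := by interval_cases j <;> first | contradiction | assumption
      simp only [hj_eq]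
      rfl
  have hfour : h 4 = 0 := by
    obtain ⟨u, -, hu4, hu3⟩ := hback 0
    refine hah.last_eq_zero ⟨u, hu3, hu4⟩ fun j hj => ?_
    interval_cases j <;> assumption
  intro j hj
  interval_cases j <;> assumption

theorem rigid_of_norm_sub_two_le {n : ℕ} (hn : 4 ≤ n) :
    ∀ {τ : ℂ}, ‖τ - 2‖ ≤ 2 → Rigid.{u} n τ := by
  induction n, hn using Nat.le_induction with
  | base => exact rigid_four
  | succ n hn ih => exact fun hτ => Rigid.succ (by omega) hτ fun _ => ih

end Chains

section ThirdMoment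

open Module

variable {M d : ℕ}

/-- The relaxed third moment as a vector for the Frobenius inner product, which makes the loss a
squared distance. -/
def mu3Vec (p : Fin M → ℝ) (C : Fin (M + 1) → EuclideanSpace ℝ (Fin d)) :
    EuclideanSpace ℝ (Fin d × Fin d × Fin d) :=
  WithLp.toLp 2 fun t => mu3 C p t.1 t.2.1 t.2.2

theorem contDiff_uncurry_mu3Vec {n : WithTop ℕ∞} :
    ContDiff ℝ n (Function.uncurry (mu3Vec (M := M) (d := d))) := by
  refine contDiff_euclidean.2 fun t => ?_
  simp only [mu3Vec, mu3, Function.uncurry]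
  fun_prop

theorem contDiff_mu3Vec (p : Fin M → ℝ) {n : WithTop ℕ∞} :
    ContDiff ℝ n (mu3Vec (d := d) p) :=
  contDiff_uncurry_mu3Vec.comp (contDiff_prodMk_right p)

theorem Lloss_mu3_eq_norm_sq (p : Fin M → ℝ) (C C' : Fin (M + 1) → EuclideanSpace ℝ (Fin d)) :
    Lloss (mu3 C p) C' p = ‖mu3Vec p C' - mu3Vec p C‖ ^ 2 := by
  simp [Lloss, EuclideanSpace.norm_sq_eq, Fintype.sum_prod_type, mu3Vec]

theorem exists_nhds_deriv_Lloss_neg (p : Fin M → ℝ)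
    (Cstar : Fin (M + 1) → EuclideanSpace ℝ (Fin d))
    (hinj : Function.Injective (fderiv ℝ (mu3Vec p) Cstar)) :
    ∃ U ∈ nhds Cstar, ∀ C ∈ U, C ≠ Cstar →
      deriv (fun s : ℝ => Lloss (mu3 Cstar p) (fun i => C i + s • (Cstar i - C i)) p) 0 < 0 := by
  refine ⟨_, eventually_inner_fderiv_pos (contDiff_mu3Vec p).contDiffAt hinj, fun C hC hne => ?_⟩
  have hline : HasDerivAt (fun s : ℝ => mu3Vec p (C + s • (Cstar - C)))
      (fderiv ℝ (mu3Vec p) C (Cstar - C)) 0 :=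
    ((contDiff_mu3Vec (n := 1) p).differentiable one_ne_zero C).hasFDerivAt.hasLineDerivAt _
  have hloss : HasDerivAt
      (fun s : ℝ => Lloss (mu3 Cstar p) (fun i => C i + s • (Cstar i - C i)) p)
      (2 * inner ℝ (mu3Vec p C - mu3Vec p Cstar) (fderiv ℝ (mu3Vec p) C (Cstar - C))) 0 := by
    have heq : (fun s : ℝ => Lloss (mu3 Cstar p) (fun i => C i + s • (Cstar i - C i)) p)
        = fun s => ‖mu3Vec p (C + s • (Cstar - C)) - mu3Vec p Cstar‖ ^ 2 :=
      funext fun s => Lloss_mu3_eq_norm_sq p Cstar _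
    rw [heq]
    simpa only [zero_smul, add_zero] using (hline.sub_const (mu3Vec p Cstar)).norm_sq
  have hpos := hC hne
  rw [← neg_sub Cstar C, map_neg, inner_neg_right] at hpos
  rw [hloss.deriv]
  linarith

/-- A real vector `c` as the complex linear functional `x ↦ ∑ k, x k * c k`. -/
def complexPairing : EuclideanSpace ℝ (Fin d) →ₗ[ℝ] Dual ℂ (Fin d → ℂ) :=
  Fintype.bilinearCombination ℂ ℝ ∘ₗ
    (Complex.ofRealCLM.toLinearMap.compLeft (Fin d)) ∘ₗ (WithLp.linearEquiv 2 ℝ _).toLinearMap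

theorem complexPairing_apply (c : EuclideanSpace ℝ (Fin d)) (x : Fin d → ℂ) :
    complexPairing c x = ∑ k, x k * c k := by
  simp [complexPairing, Fintype.bilinearCombination_apply, Fintype.linearCombination_apply]

theorem complexPairing_injective :
    Function.Injective (complexPairing (d := d)) := by
  refine (injective_iff_map_eq_zero _).2 fun c hc => ?_
  ext k
  simpa [complexPairing_apply, Pi.single_apply] using LinearMap.congr_fun hc (Pi.single k 1)

/-- The third tensor power `c ⊗ c ⊗ c` in coordinates. -/
def tensorCube (c : EuclideanSpace ℝ (Fin d)) : EuclideanSpace ℝ (Fin d × Fin d × Fin d) :=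
  WithLp.toLp 2 fun t => c t.1 * c t.2.1 * c t.2.2

theorem mu3Vec_eq_sum_tensorCube (p : Fin M → ℝ) (C : Fin (M + 1) → EuclideanSpace ℝ (Fin d)) :
    mu3Vec p C = ∑ i, p i • ((1 / 12 : ℝ) • tensorCube (C i.castSucc + C i.succ)
      + (1 / 6 : ℝ) • tensorCube (C i.castSucc) + (1 / 6 : ℝ) • tensorCube (C i.succ)) := by
  ext t
  simp [mu3Vec, mu3, tensorCube, mul_add]

/-- Evaluation of a 3-tensor, seen as a cubic form, at a complex vector `x`. -/
def tripleContraction (x : Fin d → ℂ) : EuclideanSpace ℝ (Fin d × Fin d × Fin d) →L[ℝ] ℂ :=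
  ∑ t, (x t.1 * x t.2.1 * x t.2.2) • Complex.ofRealCLM ∘L EuclideanSpace.proj t

theorem tripleContraction_tensorCube (x : Fin d → ℂ) (c : EuclideanSpace ℝ (Fin d)) :
    tripleContraction x (tensorCube c) = complexPairing c x ^ 3 := by
  have hcube : complexPairing c x ^ 3
      = ∑ j, ∑ k, ∑ l, x j * c j * (x k * c k * (x l * c l)) := by
    rw [complexPairing_apply, pow_three, Finset.sum_mul_sum, Finset.sum_mul_sum]
    simp only [Finset.mul_sum]
  rw [hcube]
  simp [tripleContraction, tensorCube, Fintype.sum_prod_type, mul_assoc, mul_left_comm]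

theorem hasDerivAt_edge_cubic (a b u v : ℂ) :
    HasDerivAt (fun t : ℝ => 1 / 12 * ((a + t * u) + (b + t * v)) ^ 3
      + 1 / 6 * (a + t * u) ^ 3 + 1 / 6 * (b + t * v) ^ 3) (1 / 4 * edgeForm a b u v) 0 := by
  have hline (c w : ℂ) : HasDerivAt (fun t : ℝ => c + t * w) w 0 := by
    simpa using (((hasDerivAt_id (0 : ℝ)).ofReal_comp).mul_const w).const_add c
  refine (((((hline a u).fun_add (hline b v)).fun_pow 3).const_mul (1 / 12)).fun_add
    (((hline a u).fun_pow 3).const_mul (1 / 6)) |>.fun_add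
      (((hline b v).fun_pow 3).const_mul (1 / 6))).congr_deriv ?_
  simp only [edgeForm, Complex.ofReal_zero, zero_mul, add_zero]
  ring

theorem sum_edgeForm_eq_zero_of_fderiv_mu3Vec_eq_zero {p : Fin M → ℝ}
    {C H : Fin (M + 1) → EuclideanSpace ℝ (Fin d)} (hH : fderiv ℝ (mu3Vec p) C H = 0)
    (x : Fin d → ℂ) :
    ∑ i, p i * edgeForm (complexPairing (C i.castSucc) x) (complexPairing (C i.succ) x)
      (complexPairing (H i.castSucc) x) (complexPairing (H i.succ) x) = 0 := by
  have hzero : HasDerivAt (fun t : ℝ => tripleContraction x (mu3Vec p (C + t • H))) 0 0 := by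
    have hline : HasDerivAt (fun t : ℝ => mu3Vec p (C + t • H)) (fderiv ℝ (mu3Vec p) C H) 0 :=
      ((contDiff_mu3Vec (n := 1) p).differentiable one_ne_zero C).hasFDerivAt.hasLineDerivAt H
    rw [hH] at hline
    simpa only [map_zero] using! (tripleContraction x).hasFDerivAt.comp_hasDerivAt 0 hline
  have hsum := HasDerivAt.fun_sum (u := Finset.univ) fun i _ =>
    (hasDerivAt_edge_cubic (complexPairing (C i.castSucc) x) (complexPairing (C i.succ) x)
      (complexPairing (H i.castSucc) x) (complexPairing (H i.succ) x)).const_mul (p i : ℂ)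
  have hquarter := hzero.unique (hsum.congr_of_eventuallyEq (.of_forall fun t => by
    simp [mu3Vec_eq_sum_tensorCube, tripleContraction_tensorCube, mul_add]))
  simpa [mul_left_comm _ (4⁻¹ : ℂ), ← Finset.mul_sum] using hquarter.symm

/-- The vertices of a chain as complex functionals, indexed by `ℕ` to match `IsBasedChain`; indices
above `M` wrap around and carry no meaning. -/
def vertexFunctional (C : Fin (M + 1) → EuclideanSpace ℝ (Fin d)) (j : ℕ) : Dual ℂ (Fin d → ℂ) :=
  complexPairing (C (Fin.ofNat (M + 1) j))

theorem vertexFunctional_val (C : Fin (M + 1) → EuclideanSpace ℝ (Fin d)) (j : Fin (M + 1)) :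
    vertexFunctional C j = complexPairing (C j) := by
  simp [vertexFunctional]

theorem injective_fderiv_mu3Vec_const (hM : 4 ≤ M) {C : Fin (M + 1) → EuclideanSpace ℝ (Fin d)}
    (hC : IsBasedChain M (vertexFunctional C)) {r : ℝ} (hr : r ≠ 0) :
    Function.Injective (fderiv ℝ (mu3Vec fun _ => r) C) := by
  refine (injective_iff_map_eq_zero _).2 fun H hH => ?_
  have hsyz : IsSyzygy M 0 (vertexFunctional C) (vertexFunctional H) := fun x => by
    have hsum := sum_edgeForm_eq_zero_of_fderiv_mu3Vec_eq_zero hH x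
    rw [← Finset.mul_sum] at hsum
    rw [zero_mul, zero_mul, add_zero, Finset.sum_range]
    simpa [hr, ← vertexFunctional_val] using hsum
  funext j
  have hj := rigid_of_norm_sub_two_le hM (τ := 0) (by simp) _ _ _ hC hsyz j (by omega)
  exact complexPairing_injective (by simpa [vertexFunctional_val] using hj)

end ThirdMoment

section NondegenerateChains

variable {M : ℕ} {E : Type*} [NormedAddCommGroup E]

/-- Polygonal chains with `M` edges in `E`, none of them degenerate. -/
def nondegenerateChains (M : ℕ) (E : Type*) : Set (Fin (M + 1) → E) :=
  {C | ∀ i : Fin M, C i.succ ≠ C i.castSucc}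

theorem isOpen_nondegenerateChains : IsOpen (nondegenerateChains M E) := by
  simp only [nondegenerateChains, ofPred_forall]
  exact isOpen_iInter_of_finite fun i =>
    isOpen_ne_fun (continuous_apply i.succ) (continuous_apply i.castSucc)

theorem continuous_partialSum (j : Fin (M + 1)) :
    Continuous fun e : Fin M → E => Fin.partialSum e j := by
  induction j using Fin.induction with
  | zero => simpa only [Fin.partialSum_zero] using continuous_const
  | succ i ih => simpa only [Fin.partialSum_succ] using ih.fun_add (continuous_apply i)

theorem add_partialSum_sub_eq (C : Fin (M + 1) → E) (j : Fin (M + 1)) :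
    C 0 + Fin.partialSum (fun i : Fin M => C i.succ - C i.castSucc) j = C j := by
  induction j using Fin.induction with
  | zero => rw [Fin.partialSum_zero, add_zero]
  | succ i ih => rw [Fin.partialSum_succ, ← add_assoc, ih, add_sub_cancel]

theorem isPreconnected_nondegenerateChains [NormedSpace ℝ E] (hE : 1 < Module.rank ℝ E) :
    IsPreconnected (nondegenerateChains M E) := by
  have himage : nondegenerateChains M E
      = (fun q : E × (Fin M → E) => fun j => q.1 + Fin.partialSum q.2 j) ''
        univ ×ˢ univ.pi fun _ => {0}ᶜ := by
    refine Subset.antisymm (fun C hC => ?_) ?_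
    · exact ⟨(C 0, fun i => C i.succ - C i.castSucc), ⟨trivial, fun i _ => sub_ne_zero.2 (hC i)⟩,
        funext (add_partialSum_sub_eq C)⟩
    · rintro _ ⟨⟨w, e⟩, ⟨-, he⟩, rfl⟩ i
      simpa [Fin.partialSum_succ] using he i trivial
  rw [himage]
  refine (isPreconnected_univ.prod (isPreconnected_univ_pi fun _ =>
    (isConnected_compl_singleton_of_one_lt_rank hE 0).isPreconnected)).image _ ?_
  exact (continuous_pi fun j =>
    continuous_fst.add ((continuous_partialSum j).comp continuous_snd)).continuousOn

end NondegenerateChains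

section WellPosedness

variable {M d : ℕ}

theorem contDiffAt_propSeg {C : Fin (M + 1) → EuclideanSpace ℝ (Fin d)}
    (hC : C ∈ nondegenerateChains M (EuclideanSpace ℝ (Fin d))) {n : WithTop ℕ∞} :
    ContDiffAt ℝ n propSeg C := by
  have hnorm (i : Fin M) : ContDiffAt ℝ n
      (fun C : Fin (M + 1) → EuclideanSpace ℝ (Fin d) => ‖C i.succ - C i.castSucc‖) C :=
    ContDiffAt.norm ℝ (by fun_prop) (sub_ne_zero.2 (hC i))
  refine contDiffAt_pi.2 fun i => (hnorm i).div (ContDiffAt.sum fun k _ => hnorm k) ?_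
  exact (Finset.sum_pos (fun k _ => norm_pos_iff.2 (sub_ne_zero.2 (hC k)))
    ⟨i, Finset.mem_univ i⟩).ne'

theorem analyticOnNhd_fderiv_mu3Vec_propSeg :
    AnalyticOnNhd ℝ (fun C => fderiv ℝ (mu3Vec (propSeg C)) C)
      (nondegenerateChains M (EuclideanSpace ℝ (Fin d))) := fun C hC =>
  (ContDiffAt.fderiv (n := ⊤) (m := ⊤) (f := fun C => mu3Vec (propSeg C)) (g := id)
    (contDiff_uncurry_mu3Vec.contDiffAt.comp (C, C)
      (((contDiffAt_propSeg hC).comp (C, C) contDiffAt_fst).prodMk contDiffAt_snd))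
    contDiffAt_id le_rfl).analyticAt

/-- The chain with unit edges along the first `M` coordinate axes, translated so that its vertex `2`
is the origin. -/
def coordinateChain (hMd : M ≤ d) (j : Fin (M + 1)) : EuclideanSpace ℝ (Fin d) :=
  Fin.partialSum (fun i => EuclideanSpace.single (Fin.castLE hMd i) 1) j
    - Fin.partialSum (fun i => EuclideanSpace.single (Fin.castLE hMd i) 1) (Fin.ofNat (M + 1) 2)

theorem coordinateChain_succ_sub (hMd : M ≤ d) (i : Fin M) :
    coordinateChain hMd i.succ - coordinateChain hMd i.castSucc
      = EuclideanSpace.single (Fin.castLE hMd i) 1 := by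
  simp [coordinateChain, Fin.partialSum_succ]

theorem coordinateChain_mem_nondegenerateChains (hMd : M ≤ d) :
    coordinateChain hMd ∈ nondegenerateChains M (EuclideanSpace ℝ (Fin d)) := fun i => by
  rw [← sub_ne_zero, coordinateChain_succ_sub]
  simp

theorem propSeg_coordinateChain (hMd : M ≤ d) :
    propSeg (coordinateChain hMd) = fun _ => (M : ℝ)⁻¹ := by
  funext i
  simp [propSeg, coordinateChain_succ_sub]

theorem complexPairing_partialSum_single (hMd : M ≤ d) (x : Fin d → ℂ) (j : Fin (M + 1)) :
    complexPairing (Fin.partialSum (fun i => EuclideanSpace.single (Fin.castLE hMd i) 1) j) x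
      = Fin.partialSum (fun i => x (Fin.castLE hMd i)) j := by
  induction j using Fin.induction with
  | zero => simp
  | succ i ih => simp [Fin.partialSum_succ, ih, complexPairing_apply, apply_ite Complex.ofReal]

theorem isBasedChain_coordinateChain (hM : 2 ≤ M) (hMd : M ≤ d) :
    IsBasedChain M (vertexFunctional (coordinateChain hMd)) where
  base := by simp [vertexFunctional, coordinateChain]
  exists_eq b hb := by
    refine ⟨fun k => b (k + 1) - b k, fun j hj => ?_⟩
    have hsum (j : Fin (M + 1)) : Fin.partialSum (fun i : Fin M => b (i + 1) - b i) j
        = b j - b 0 := by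
      induction j using Fin.induction with
      | zero => simp
      | succ i ih => simp [Fin.partialSum_succ, ih]
    simp [vertexFunctional, coordinateChain, complexPairing_partialSum_single, hsum, hb,
      Nat.mod_eq_of_lt (show j < M + 1 by omega), Nat.mod_eq_of_lt (show 2 < M + 1 by omega)]

end WellPosedness

theorem recovery_C_from_pstar_wellposed_general (d M : ℕ) (hM : 4 ≤ M) (hMd : M ≤ d) :
    ∀ᵐ Cstar : Fin (M + 1) → EuclideanSpace ℝ (Fin d) ∂volume,
      (∀ i : Fin M, Cstar i.succ ≠ Cstar i.castSucc) →
      ∃ U ∈ nhds Cstar, ∀ C ∈ U, C ≠ Cstar →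
        deriv (fun s : ℝ =>
            Lloss (mu3 Cstar (propSeg Cstar))
              (fun i => C i + s • (Cstar i - C i)) (propSeg Cstar)) 0 < 0 := by
  have hrank : 1 < Module.rank ℝ (EuclideanSpace ℝ (Fin d)) := by
    rw [rank_eq_card_basis (EuclideanSpace.basisFun (Fin d) ℝ).toBasis, Fintype.card_fin]
    exact_mod_cast (show 1 < d by omega)
  have hwitness : Function.Injective
      (fderiv ℝ (mu3Vec (propSeg (coordinateChain hMd))) (coordinateChain hMd)) := by
    rw [propSeg_coordinateChain]
    exact injective_fderiv_mu3Vec_const hM (isBasedChain_coordinateChain (by omega) hMd)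
      (inv_ne_zero (by positivity))
  filter_upwards [ae_injective_of_analyticOnNhd volume isOpen_nondegenerateChains
    (isPreconnected_nondegenerateChains hrank) analyticOnNhd_fderiv_mu3Vec_propSeg
    (coordinateChain_mem_nondegenerateChains hMd) hwitness] with C hinj hC
  exact exists_nhds_deriv_Lloss_neg _ C (hinj hC)

/-- Let `M = d ≥ 4`. For almost every `C*` with consecutive rows distinct,
with proportional segment lengths `p*` and `m₃* = μ₃(C*, p*)`, there is a neighborhood of `C*`
on which, for every `C ≠ C*`, the directional derivative of `C ↦ L_{m₃*}(C, p*)` at `C` in the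
direction `C* − C` is strictly negative. -/
theorem recovery_C_from_pstar_wellposed (d : ℕ) (hd : 4 ≤ d) (M : ℕ) (hMd : M = d) :
    ∀ᵐ Cstar : Fin (M + 1) → EuclideanSpace ℝ (Fin d) ∂volume,
      (∀ i : Fin M, Cstar i.succ ≠ Cstar i.castSucc) →
      ∃ U ∈ nhds Cstar, ∀ C ∈ U, C ≠ Cstar →
        deriv (fun s : ℝ =>
            Lloss (mu3 Cstar (propSeg Cstar))
              (fun i => C i + s • (Cstar i - C i)) (propSeg Cstar)) 0 < 0 := by
  subst hMd
  exact recovery_C_from_pstar_wellposed_general M M hd le_rfl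
end
end
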